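/- In G(𝒜): if the m-th symbol of L is a relation symbol R of arity n, and a₁,…,aₙ ∈ A are such that w_m(a₁,…,aₙ,b) = e holds in G(𝒜) (where the aᵢ denote the images of the corresponding generators), then R^𝒜(a₁,…,aₙ) holds in 𝒜. -/

import Mathlib

/-!
Common setup: an `L`-structure `𝒜` for a language whose symbols are enumerated
(`m`-th symbol, `m ≥ 1`, each a function or relation symbol of arity ≥ 1), and the
presented group `G(𝒜)` of Harrison-Trainor and Ho.
-/

/-- A first-order language with symbols enumerated by `ℕ` (the `m`-th symbol, for `m ≥ 1`,
is a function symbol if `isFunc m`, and a relation symbol otherwise, of arity `arity m ≥ 1`),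
together with an interpretation on a domain `A`: `funcInterp m` interprets the `m`-th symbol
when it is a function symbol, and `relInterp m` when it is a relation symbol. -/
structure IndexedStructure where
  A : Type
  arity : ℕ → ℕ
  arity_pos : ∀ m, 1 ≤ m → 1 ≤ arity m
  isFunc : ℕ → Prop
  funcInterp : ∀ m, (Fin (arity m) → A) → A
  relInterp : ∀ m, (Fin (arity m) → A) → Prop

/-- The generating set of `G(𝒜)`: one generator for each element of the domain `A`,
plus five further generators `b`, `c`, `d`, `f₁`, `f₂`. -/
inductive GenSym (A : Type) : Type
  | elt : A → GenSym A
  | b : GenSym A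
  | c : GenSym A
  | d : GenSym A
  | f1 : GenSym A
  | f2 : GenSym A

/-- `chainProd lo x y = x y^{(lo+1)²} x y^{(lo+2)²} ⋯ x y^{(lo+1000)²}`.
So `u_A = chainProd 0`, `u_b = chainProd 1000`, `u_c = chainProd 2000`,
`u_d = chainProd 3000`, and `v = chainProd 4000`. -/
def chainProd {G : Type*} [Group G] (lo : ℕ) (x y : G) : G :=
  ((List.range 1000).map fun k => x * y ^ ((lo + k + 1) ^ 2)).prod

/-- `wProd m xs y = x₁⋯xₙ y^{100m+1} x₁⋯xₙ y^{100m+2} ⋯ x₁⋯xₙ y^{100m+100}`,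
i.e. the word `w_m(x₁,…,xₙ,y)`. -/
def wProd {G : Type*} [Group G] (m : ℕ) {n : ℕ} (xs : Fin n → G) (y : G) : G :=
  ((List.range 100).map fun k => (List.ofFn xs).prod * y ^ (100 * m + k + 1)).prod

/-- The set of relators of the presentation of `G(𝒜)`. -/
def grpRels (S : IndexedStructure) (p₁ p₂ : ℕ) : Set (FreeGroup (GenSym S.A)) :=
  {FreeGroup.of GenSym.f1 ^ p₁, FreeGroup.of GenSym.f2 ^ p₂,
    chainProd 4000 (FreeGroup.of GenSym.f1) (FreeGroup.of GenSym.f2),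
    chainProd 4000 (FreeGroup.of GenSym.f2) (FreeGroup.of GenSym.f1),
    chainProd 1000 (FreeGroup.of GenSym.b) (FreeGroup.of GenSym.f1),
    chainProd 1000 (FreeGroup.of GenSym.b) (FreeGroup.of GenSym.f2),
    chainProd 2000 (FreeGroup.of GenSym.c) (FreeGroup.of GenSym.f1),
    chainProd 2000 (FreeGroup.of GenSym.c) (FreeGroup.of GenSym.f2),
    chainProd 3000 (FreeGroup.of GenSym.d) (FreeGroup.of GenSym.f1),
    chainProd 3000 (FreeGroup.of GenSym.d) (FreeGroup.of GenSym.f2)}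
  ∪ {r | ∃ a : S.A,
      r = chainProd 0 (FreeGroup.of (GenSym.elt a)) (FreeGroup.of GenSym.c) ∨
      r = chainProd 0 (FreeGroup.of (GenSym.elt a)) (FreeGroup.of GenSym.d)}
  ∪ {r | ∃ m, 1 ≤ m ∧ S.isFunc m ∧ ∃ as : Fin (S.arity m) → S.A,
      r = wProd m (fun i => FreeGroup.of (GenSym.elt (as i))) (FreeGroup.of GenSym.b) *
        (FreeGroup.of (GenSym.elt (S.funcInterp m as)))⁻¹}
  ∪ {r | ∃ m, 1 ≤ m ∧ ¬ S.isFunc m ∧ ∃ as : Fin (S.arity m) → S.A,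
      S.relInterp m as ∧
      r = wProd m (fun i => FreeGroup.of (GenSym.elt (as i))) (FreeGroup.of GenSym.b)}

/-- The group `G(𝒜)`, presented on the generators `GenSym A` with relators `grpRels`. -/
abbrev GA (S : IndexedStructure) (p₁ p₂ : ℕ) : Type :=
  PresentedGroup (grpRels S p₁ p₂)

/-- The image in `G(𝒜)` of a generator. -/
def gen (S : IndexedStructure) (p₁ p₂ : ℕ) (g : GenSym S.A) : GA S p₁ p₂ :=
  PresentedGroup.of g

/-!
Suppose that `R^𝒜(a₁,…,aₙ)` is false. With a new generator for the first half of the word `w_m` at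
each tuple, the relators of `G(𝒜)` and the word `w_m(a₁,…,aₙ,b)` turn into a family of words made of
blocks `h y^e`, besides the powers of `f₁` and `f₂`. Any block but the first of a word determines
this word and its position there, and every block is short compared with the word. So the family
satisfies `C'(1/5)`, even when an argument cancels with the value of a function.

By small cancellation a member of such a family is not a consequence of the others. Take a line
labelled by this member, and for each relator that can be read for less than `2/5` of its length at
a vertex attach an arc reading the rest of it. New arcs are longer than `3/5` of their relators, so
after identifying their common initial parts the graph is still folded, and a path reading `2/5` of
a relator is part of a closed path reading all of it. In the limit every relator closes up at every
vertex, and the free group acts on the vertices. The relators act trivially, but the member that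
labels the line moves one end of the line to the other.
-/

namespace SmallCancellation

/-! ### Paths in labelled graphs -/

section Paths

variable {V L : Type*} {E E' : V → L → V → Prop} {f : ℤ → L} {γ : ℤ → V} {a b n : ℤ} {u : V}

/-- A labelled graph is encoded by the relation `E u l v`: "an edge labelled `l` leads from `u` to
`v`". From time `a` to time `b`, the vertices `γ` form a path reading the bi-infinite word `f`. -/
def IsPath (E : V → L → V → Prop) (f : ℤ → L) (γ : ℤ → V) (a b : ℤ) : Prop :=
  ∀ i, a ≤ i → i < b → E (γ i) (f i) (γ (i + 1))

/-- The `n`-periodic word `f` labels a closed path of length `n` that is at `u` at time `a`. -/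
def ClosesUp (E : V → L → V → Prop) (f : ℤ → L) (n a : ℤ) (u : V) : Prop :=
  ∃ γ : ℤ → V, γ a = u ∧ (∀ i, E (γ i) (f i) (γ (i + 1))) ∧ Function.Periodic γ n

theorem IsPath.mono (hE : ∀ {u l v}, E u l v → E' u l v) (h : IsPath E f γ a b) :
    IsPath E' f γ a b :=
  fun i hai hib => hE (h i hai hib)

theorem ClosesUp.mono (hE : ∀ {u l v}, E u l v → E' u l v) (h : ClosesUp E f n a u) :
    ClosesUp E' f n a u :=
  let ⟨γ, hu, hγ, hper⟩ := h
  ⟨γ, hu, fun i => hE (hγ i), hper⟩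

theorem closesUp_shift_iff {k : ℤ} :
    ClosesUp E (fun i => f (i + k)) n a u ↔ ClosesUp E f n (a + k) u := by
  constructor
  · rintro ⟨γ, hu, hγ, hper⟩
    refine ⟨fun i => γ (i - k), by simpa using hu, fun i => ?_, hper.sub_const k⟩
    convert hγ (i - k) using 2 <;> ring
  · rintro ⟨γ, hu, hγ, hper⟩
    refine ⟨fun i => γ (i + k), hu, fun i => ?_, hper.add_const k⟩
    convert hγ (i + k) using 2
    ring

theorem ClosesUp.exists_edge (h : ClosesUp E f n a u) : ∃ v, E u (f a) v := by
  obtain ⟨γ, rfl, hγ, -⟩ := h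
  exact ⟨_, hγ a⟩

theorem IsPath.extend (h : IsPath E f γ a b) {v : V} (hv : E (γ b) (f b) v) :
    IsPath E f (fun i => if i ≤ b then γ i else v) a (b + 1) := by
  intro i hai hib
  rcases (by omega : i < b ∨ i = b) with hib' | rfl
  · simpa [hib'.le, Int.add_one_le_iff.2 hib'] using h i hai hib'
  · simpa using hv

theorem map_emod_of_periodic {α : Type*} {f : ℤ → α} (hf : Function.Periodic f n) (i : ℤ) :
    f (i % n) = f i := by
  rw [Int.emod_def, mul_comm]
  exact hf.sub_int_mul_eq (i / n)

theorem IsPath.closesUp (hn : 0 < n) (hf : Function.Periodic f n) (h : IsPath E f γ 0 n)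
    (hγ : γ n = γ 0) : ClosesUp E f n 0 (γ 0) := by
  refine ⟨fun i => γ (i % n), by simp, fun i => ?_, fun i => by simp⟩
  have hlt := Int.emod_lt_of_pos i hn
  have hedge := h (i % n) (Int.emod_nonneg i hn.ne') hlt
  rw [map_emod_of_periodic hf] at hedge
  suffices hsucc : γ (i % n + 1) = γ ((i + 1) % n) by rwa [hsucc] at hedge
  rw [← Int.emod_add_emod i n 1]
  rcases (by omega : i % n + 1 < n ∨ i % n + 1 = n) with hin | hin
  · rw [Int.emod_eq_of_lt (by have := Int.emod_nonneg i hn.ne'; omega) hin]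
  · rw [hin, hγ, Int.emod_self]

end Paths

/-! ### Folded graphs -/

section Folded

variable {V L : Type*} [InvolutiveInv L] {E : V → L → V → Prop} {f : ℤ → L} {γ δ : ℤ → V}
  {a b n : ℤ} {u : V}

/-- A labelled graph is folded, in the sense of Stallings, if reversing an edge inverts its label
and no two edges with the same label leave the same vertex. -/
structure IsFolded (E : V → L → V → Prop) : Prop where
  symm : ∀ {u l v}, E u l v → E v l⁻¹ u
  unique : ∀ {u l v v'}, E u l v → E u l v' → v = v'

/-- The word `f` read backwards from time `k`: its part between times `0` and `m` is the formal
inverse of the part of `f` between times `k - m` and `k`. -/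
def inverseWord (k : ℤ) (f : ℤ → L) (i : ℤ) : L := (f (k - 1 - i))⁻¹

theorem inverseWord_inverseWord (k : ℤ) (f : ℤ → L) :
    inverseWord k (inverseWord k f) = f := by
  funext i
  simp [inverseWord]

theorem IsPath.inverse (hE : IsFolded E) (h : IsPath E f γ a b) (k : ℤ) :
    IsPath E (inverseWord k f) (fun i => γ (k - i)) (k - b) (k - a) := by
  intro i hai hib
  convert hE.symm (h (k - 1 - i) (by omega) (by omega)) using 2
  · ring
  · rfl
  · ring

theorem ClosesUp.inverse (hE : IsFolded E) (h : ClosesUp E f n a u) (k : ℤ) :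
    ClosesUp E (inverseWord k f) n (k - a) u := by
  obtain ⟨γ, hu, hγ, hper⟩ := h
  refine ⟨fun i => γ (k - i), by simpa using hu, fun i => ?_, hper.const_sub k⟩
  have hpath : IsPath E f γ (k - i - 1) (k - i) := fun j _ _ => hγ j
  exact hpath.inverse hE k i (by omega) (by omega)

theorem IsPath.eq_of_eq_left (hE : IsFolded E) (hγ : IsPath E f γ a b) (hδ : IsPath E f δ a b)
    (hab : γ a = δ a) : ∀ i, a ≤ i → i ≤ b → γ i = δ i := by
  intro i hi
  induction i, hi using Int.leInduction with
  | base => exact fun _ => hab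
  | succ i hi ih =>
    intro hib
    have hγi := hγ i hi (by omega)
    rw [ih (by omega)] at hγi
    exact hE.unique hγi (hδ i hi (by omega))

theorem IsPath.eq_of_eq_right (hE : IsFolded E) (hγ : IsPath E f γ a b) (hδ : IsPath E f δ a b)
    (hab : γ b = δ b) : ∀ i, a ≤ i → i ≤ b → γ i = δ i := by
  intro i hai hib
  simpa using (hγ.inverse hE 0).eq_of_eq_left hE (hδ.inverse hE 0) (by simpa using hab) (-i)
    (by omega) (by omega)

theorem IsPath.closesUp_iff (hE : IsFolded E) (h : IsPath E f γ a b) (hab : a ≤ b) :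
    ClosesUp E f n a (γ a) ↔ ClosesUp E f n b (γ b) := by
  constructor
  · rintro ⟨δ, ha, hδ, hper⟩
    exact ⟨δ, (h.eq_of_eq_left hE (fun i _ _ => hδ i) ha.symm b hab le_rfl).symm, hδ, hper⟩
  · rintro ⟨δ, hb, hδ, hper⟩
    exact ⟨δ, (h.eq_of_eq_right hE (fun i _ _ => hδ i) hb.symm a le_rfl hab).symm, hδ, hper⟩

end Folded

/-! ### Systems of relators and arcs -/

/-- A symmetrized system of cyclically reduced relators satisfying the small cancellation condition
`C'(1/5)`. A relator of length `n` is encoded as an `n`-periodic bi-infinite word, so that passing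
to a cyclic conjugate is shifting the word. -/
structure RelatorSystem (L : Type*) [InvolutiveInv L] where
  IsRelator : (ℤ → L) → ℤ → Prop
  pos : ∀ {f n}, IsRelator f n → 0 < n
  periodic : ∀ {f n}, IsRelator f n → Function.Periodic f n
  reduced : ∀ {f n}, IsRelator f n → ∀ i, f (i + 1) ≠ (f i)⁻¹
  shift : ∀ {f n}, IsRelator f n → ∀ k, IsRelator (fun i => f (i + k)) n
  inverse : ∀ {f n}, IsRelator f n → ∀ k, IsRelator (inverseWord k f) n
  eq_of_agree_left : ∀ {f g n m l}, IsRelator f n → IsRelator g m → n ≤ 5 * l →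
    (∀ i, 0 ≤ i → i < l → f i = g i) → f = g ∧ n = m

/-- The vertices of the graphs to be built: those of a base line, and those created when going from
stage `k` to stage `k + 1`, which are named after the vertex from which they are reached and the
word read on the way. -/
inductive Vertex (L : Type*)
  | base : ℤ → Vertex L
  | node : ℕ → Vertex L → List L → Vertex L

/-- The number of the first graph in which a vertex may occur. -/
def Vertex.stage {L : Type*} : Vertex L → ℕ
  | base _ => 0
  | node k _ _ => k + 1

section Arcs

variable {L : Type*} [InvolutiveInv L] {R : RelatorSystem L} {k : ℕ}
  {E : Vertex L → L → Vertex L → Prop} {f g : ℤ → L} {n m l a i j : ℤ} {u : Vertex L}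

theorem RelatorSystem.eq_of_agree (hf : R.IsRelator f n) (hg : R.IsRelator g m)
    (hl : n ≤ 5 * l ∨ m ≤ 5 * l) (h : ∀ i, 0 ≤ i → i < l → f i = g i) : f = g ∧ n = m := by
  rcases hl with hn | hm
  · exact R.eq_of_agree_left hf hg hn h
  · obtain ⟨hgf, hmn⟩ := R.eq_of_agree_left hg hf hm fun i h0 hi => (h i h0 hi).symm
    exact ⟨hgf.symm, hmn.symm⟩

/-- The graph of stage `k`: it is folded, and a path reading `2/5` of a relator is part of a closed
path reading this relator. -/
structure IsStage (R : RelatorSystem L) (k : ℕ) (E : Vertex L → L → Vertex L → Prop) : Prop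
    extends IsFolded E where
  stage_le : ∀ {u l v}, E u l v → u.stage ≤ k
  closesUp_of_isPath : ∀ {f n γ s t}, R.IsRelator f n → 2 * n ≤ 5 * (t - s) → IsPath E f γ s t →
    ClosesUp E f n s (γ s)

theorem IsStage.exists_maximal_path (hS : IsStage R k E) (hf : R.IsRelator f n) (hu : u.stage ≤ k)
    (h : ¬ ClosesUp E f n a u) : ∃ γ b, γ a = u ∧ a ≤ b ∧ IsPath E f γ a b ∧
      5 * (b - a) < 2 * n ∧ (γ b).stage ≤ k ∧ ∀ v, ¬ E (γ b) (f b) v := by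
  have hn := R.pos hf
  let Reaches (b : ℤ) : Prop := a ≤ b ∧ ∃ γ, γ a = u ∧ IsPath E f γ a b
  have short {b γ} (hγa : γ a = u) (hγ : IsPath E f γ a b) : 5 * (b - a) < 2 * n := by
    by_contra hlong
    exact h (hγa ▸ hS.closesUp_of_isPath hf (by omega) hγ)
  obtain ⟨b, ⟨hab, γ, hγa, hγ⟩, hmax⟩ := Int.exists_greatest_of_bdd (P := Reaches)
    ⟨a + 2 * n, by rintro b ⟨-, γ, hγa, hγ⟩; have := short hγa hγ; omega⟩
    ⟨a, le_rfl, fun _ => u, rfl, fun i _ _ => by omega⟩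
  refine ⟨γ, b, hγa, hab, hγ, short hγa hγ, ?_, fun v hv => ?_⟩
  · rcases hab.eq_or_lt with rfl | hab'
    · rwa [hγa]
    · have hedge := hγ (b - 1) (by omega) (by omega)
      rw [sub_add_cancel] at hedge
      exact hS.stage_le (hS.symm hedge)
  · have := hmax (b + 1) ⟨by omega, _, by simpa [hab] using hγa, hγ.extend hv⟩
    omega

/-- A path to be attached to a graph of stage `k`: the part of length `length` of a loop reading a
relator of length `period`, whose other part, leading from `target` back to `source`, is in the
graph. The conditions `no_edge_source` and `no_edge_target` say that this part is maximal. -/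
@[ext]
structure Arc (R : RelatorSystem L) (k : ℕ) (E : Vertex L → L → Vertex L → Prop) where
  source : Vertex L
  target : Vertex L
  word : ℤ → L
  period : ℤ
  length : ℤ
  isRelator : R.IsRelator word period
  source_stage_le : source.stage ≤ k
  target_stage_le : target.stage ≤ k
  no_edge_source : ∀ v, ¬ E source (word 0) v
  no_edge_target : ∀ v, ¬ E target (word (length - 1))⁻¹ v
  length_le : length ≤ period
  period_lt : 3 * period < 5 * length
  exists_return : ∃ γ, γ length = target ∧ γ period = source ∧ IsPath E word γ length period

theorem Arc.length_pos (a : Arc R k E) : 0 < a.length := by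
  have := R.pos a.isRelator
  have := a.period_lt
  omega

/-- The same arc, travelled in the opposite direction. -/
@[simps]
def Arc.flip (hE : IsFolded E) (a : Arc R k E) : Arc R k E where
  source := a.target
  target := a.source
  word := inverseWord a.length a.word
  period := a.period
  length := a.length
  isRelator := R.inverse a.isRelator _
  source_stage_le := a.target_stage_le
  target_stage_le := a.source_stage_le
  no_edge_source := by simpa [inverseWord] using a.no_edge_target
  no_edge_target := by simpa [inverseWord] using a.no_edge_source
  length_le := a.length_le
  period_lt := a.period_lt
  exists_return := by
    obtain ⟨γ, htarget, hsource, hγ⟩ := a.exists_return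
    refine ⟨fun i => γ (a.length + a.period - i), by simpa using hsource, by simpa using htarget,
      ?_⟩
    convert hγ.inverse hE (a.length + a.period) using 1
    · funext i
      rw [inverseWord, inverseWord, ← R.periodic a.isRelator]
      congr 2
      ring
    · ring
    · ring

theorem Arc.length_le_length (hE : IsFolded E) {a b : Arc R k E} (hsource : a.source = b.source)
    (hword : a.word = b.word) (hperiod : a.period = b.period) : a.length ≤ b.length := by
  by_contra! hlt
  obtain ⟨γ, hγtarget, hγsource, hγ⟩ := a.exists_return
  obtain ⟨δ, -, hδsource, hδ⟩ := b.exists_return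
  rw [← hword, ← hperiod] at hδ
  have heq := hγ.eq_of_eq_right hE (fun i hi => hδ i (by omega))
    (by rw [hγsource, hperiod, hδsource, hsource]) a.length le_rfl a.length_le
  have hedge := hE.symm (hδ (a.length - 1) (by omega) (by have := a.length_le; omega))
  rw [sub_add_cancel, ← heq, hγtarget] at hedge
  exact a.no_edge_target _ hedge

theorem Arc.eq_of_word_eq (hE : IsFolded E) {a b : Arc R k E} (hsource : a.source = b.source)
    (hword : a.word = b.word) (hperiod : a.period = b.period) : a = b := by
  have hlength : a.length = b.length := le_antisymm (length_le_length hE hsource hword hperiod)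
    (length_le_length hE hsource.symm hword.symm hperiod.symm)
  refine Arc.ext hsource ?_ hword hperiod hlength
  obtain ⟨γ, hγtarget, hγsource, hγ⟩ := a.exists_return
  obtain ⟨δ, hδtarget, hδsource, hδ⟩ := b.exists_return
  rw [← hword, ← hperiod, ← hlength] at hδ
  rw [← hγtarget, ← hδtarget, ← hlength]
  exact hγ.eq_of_eq_right hE hδ (by rw [hγsource, hperiod, hδsource, hsource]) _ le_rfl a.length_le

/-- The list of the letters `f 0, …, f (i - 1)`. -/
def letters (f : ℤ → L) (i : ℤ) : List L :=
  (List.range i.toNat).map fun j : ℕ => f j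

omit [InvolutiveInv L] in
theorem letters_eq_letters_iff (hi : 0 ≤ i) (hj : 0 ≤ j) :
    letters f i = letters g j ↔ i = j ∧ ∀ x, 0 ≤ x → x < i → f x = g x := by
  constructor
  · intro h
    obtain rfl : i = j := by
      have := congrArg List.length h
      simp only [letters, List.length_map, List.length_range] at this
      omega
    refine ⟨rfl, fun x hx hxi => ?_⟩
    lift x to ℕ using hx
    exact List.map_inj_left.1 h x (List.mem_range.2 (by omega))
  · rintro ⟨rfl, h⟩
    exact List.map_congr_left fun x hx => h x (by omega) (by rw [List.mem_range] at hx; omega)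

/-- The name of the `i`-th interior vertex of an arc: the endpoint closer to it, with the word read
from there. At the midpoint one of the two names is chosen, and since the choice is a function of
the unordered pair of names, it does not depend on the direction of the arc. -/
noncomputable def Arc.label (a : Arc R k E) (i : ℤ) : Vertex L × List L :=
  let forward := (a.source, letters a.word i)
  let backward := (a.target, letters (inverseWord a.length a.word) (a.length - i))
  if 2 * i < a.length then forward
  else if a.length < 2 * i then backward
  else (Quot.out s(forward, backward)).1

/-- The `i`-th vertex of an arc. -/
noncomputable def Arc.point (a : Arc R k E) (i : ℤ) : Vertex L :=
  if i ≤ 0 then a.source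
  else if a.length ≤ i then a.target
  else .node k (a.label i).1 (a.label i).2

@[simp]
theorem Arc.point_zero (a : Arc R k E) : a.point 0 = a.source := by
  simp [Arc.point]

@[simp]
theorem Arc.point_length (a : Arc R k E) : a.point a.length = a.target := by
  simp [Arc.point, a.length_pos]

theorem Arc.point_of_mem_Ioo (a : Arc R k E) (h0 : 0 < i) (hi : i < a.length) :
    a.point i = .node k (a.label i).1 (a.label i).2 := by
  rw [Arc.point, if_neg h0.not_ge, if_neg hi.not_ge]

theorem Arc.lt_stage_point_iff (a : Arc R k E) : k < (a.point i).stage ↔ 0 < i ∧ i < a.length := by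
  constructor
  · contrapose!
    intro h
    rw [Arc.point]
    split_ifs with h0 hi
    · exact a.source_stage_le
    · exact a.target_stage_le
    · exact absurd (h (by omega)) hi
  · rintro ⟨h0, hi⟩
    rw [a.point_of_mem_Ioo h0 hi]
    exact Nat.lt_succ_self k

theorem Arc.stage_point_le (a : Arc R k E) : (a.point i).stage ≤ k + 1 := by
  rw [Arc.point]
  split_ifs
  · exact a.source_stage_le.trans (Nat.le_succ k)
  · exact a.target_stage_le.trans (Nat.le_succ k)
  · exact le_rfl

theorem Arc.label_flip (hE : IsFolded E) (a : Arc R k E) (i : ℤ) :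
    (a.flip hE).label (a.length - i) = a.label i := by
  simp only [Arc.label, Arc.flip, inverseWord_inverseWord, sub_sub_cancel]
  rcases lt_trichotomy (2 * i) a.length with h | h | h
  · rw [if_neg (by omega), if_pos (by omega), if_pos h]
  · rw [if_neg (by omega), if_neg (by omega), if_neg (by omega), if_neg (by omega), Sym2.eq_swap]
  · rw [if_pos (by omega), if_neg (by omega), if_pos h]

theorem Arc.point_flip (hE : IsFolded E) (a : Arc R k E) (i : ℤ) :
    (a.flip hE).point (a.length - i) = a.point i := by
  have hlength := a.length_pos
  simp only [Arc.point, a.label_flip, Arc.flip_source, Arc.flip_target, Arc.flip_length]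
  rcases (by omega : i ≤ 0 ∨ a.length ≤ i ∨ 0 < i ∧ i < a.length) with h | h | ⟨h0, hi⟩
  · rw [if_neg (by omega), if_pos (by omega), if_pos h]
  · rw [if_pos (by omega), if_neg (by omega), if_pos h]
  · rw [if_neg (by omega), if_neg (by omega), if_neg (by omega), if_neg (by omega)]

theorem Arc.label_eq_or (a : Arc R k E) (i : ℤ) : a.label i = (a.source, letters a.word i) ∨
    a.label i = (a.target, letters (inverseWord a.length a.word) (a.length - i)) := by
  rw [Arc.label]
  split_ifs
  · exact Or.inl rfl
  · exact Or.inr rfl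
  · exact Sym2.mem_iff.1 (Sym2.out_fst_mem _)

/-- The `i`-th vertex of the arc `a` and the `j`-th vertex of the arc `b` are reached from the same
vertex by reading the same word. -/
structure Arc.Agree (a : Arc R k E) (i : ℤ) (b : Arc R k E) (j : ℤ) : Prop where
  source_eq : a.source = b.source
  index_eq : i = j
  word_eq : ∀ x, 0 ≤ x → x < i → a.word x = b.word x

theorem Arc.Agree.symm {a b : Arc R k E} (h : a.Agree i b j) : b.Agree j a i where
  source_eq := h.source_eq.symm
  index_eq := h.index_eq.symm
  word_eq x h0 hx := (h.word_eq x h0 (hx.trans_eq h.index_eq.symm)).symm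

theorem Arc.Agree.mono {a b : Arc R k E} (h : a.Agree i b i) (hji : j ≤ i) : a.Agree j b j where
  source_eq := h.source_eq
  index_eq := rfl
  word_eq x h0 hx := h.word_eq x h0 (by omega)

theorem Arc.Agree.succ {a b : Arc R k E} (h : a.Agree i b j) (hword : a.word i = b.word j) :
    a.Agree (i + 1) b (j + 1) where
  source_eq := h.source_eq
  index_eq := by rw [h.index_eq]
  word_eq x h0 hx := by
    rcases (by omega : x < i ∨ x = i) with hxi | rfl
    · exact h.word_eq x h0 hxi
    · rw [hword, h.index_eq]

-- Arcs that agree for long coincide; otherwise the vertex is closer to the common source.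
theorem Arc.Agree.point_eq (hE : IsFolded E) {a b : Arc R k E} (h : a.Agree i b j) (h0 : 0 ≤ i) :
    a.point i = b.point j := by
  obtain rfl := h.index_eq
  by_cases hlong : a.period ≤ 5 * i ∨ b.period ≤ 5 * i
  · obtain ⟨hword, hperiod⟩ := R.eq_of_agree a.isRelator b.isRelator hlong h.word_eq
    rw [Arc.eq_of_word_eq hE h.source_eq hword hperiod]
  · rcases h0.eq_or_lt with rfl | h0
    · simpa using h.source_eq
    · have ha := a.period_lt
      have hb := b.period_lt
      rw [a.point_of_mem_Ioo h0 (by omega), b.point_of_mem_Ioo h0 (by omega), Arc.label, Arc.label,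
        if_pos (by omega), if_pos (by omega), h.source_eq,
        (letters_eq_letters_iff h0.le h0.le).2 ⟨rfl, h.word_eq⟩]

theorem Arc.agree_of_point_eq (hE : IsFolded E) {a b : Arc R k E} (hi : 0 < i) (hia : i < a.length)
    (hj : 0 < j) (hjb : j < b.length) (h : a.point i = b.point j) :
    a.Agree i b j ∨ a.Agree i (b.flip hE) (b.length - j) ∨
      (a.flip hE).Agree (a.length - i) b j ∨
      (a.flip hE).Agree (a.length - i) (b.flip hE) (b.length - j) := by
  have agree_of {a b : Arc R k E} {i j : ℤ} (hi : 0 ≤ i) (hj : 0 ≤ j)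
      (h : (a.source, letters a.word i) = (b.source, letters b.word j)) : a.Agree i b j := by
    rw [Prod.mk.injEq, letters_eq_letters_iff hi hj] at h
    exact ⟨h.1, h.2.1, h.2.2⟩
  have hlabel : a.label i = b.label j := by
    rw [a.point_of_mem_Ioo hi hia, b.point_of_mem_Ioo hj hjb, Vertex.node.injEq] at h
    exact Prod.ext h.2.1 h.2.2
  rcases a.label_eq_or i with ha | ha <;> rcases b.label_eq_or j with hb | hb <;>
    rw [ha, hb] at hlabel
  · exact Or.inl (agree_of hi.le hj.le hlabel)
  · exact Or.inr (Or.inl (agree_of (b := b.flip hE) hi.le (by omega) hlabel))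
  · exact Or.inr (Or.inr (Or.inl (agree_of (a := a.flip hE) (by omega) hj.le hlabel)))
  · exact Or.inr (Or.inr (Or.inr (agree_of (a := a.flip hE) (b := b.flip hE) (by omega) (by omega)
      hlabel)))

end Arcs

/-! ### Attaching all arcs -/

section Next

variable {L : Type*} [InvolutiveInv L] {R : RelatorSystem L} {k : ℕ}
  {E : Vertex L → L → Vertex L → Prop} {f : ℤ → L} {n i j : ℤ} {u v v' : Vertex L} {l : L}

/-- The relation `E u l v` for the edges of the arcs that are attached to a graph. -/
def ArcEdge (R : RelatorSystem L) (k : ℕ) (E : Vertex L → L → Vertex L → Prop) (u : Vertex L)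
    (l : L) (v : Vertex L) : Prop :=
  ∃ (a : Arc R k E) (i : ℤ), 0 ≤ i ∧ i < a.length ∧ u = a.point i ∧ l = a.word i ∧
    v = a.point (i + 1)

/-- The graph of stage `k + 1`, obtained from a graph of stage `k` by attaching all arcs. -/
def Next (R : RelatorSystem L) (k : ℕ) (E : Vertex L → L → Vertex L → Prop) (u : Vertex L) (l : L)
    (v : Vertex L) : Prop :=
  E u l v ∨ ArcEdge R k E u l v

theorem Arc.isPath_point (a : Arc R k E) : IsPath (Next R k E) a.word a.point 0 a.length :=
  fun i h0 hi => Or.inr ⟨a, i, h0, hi, rfl, rfl, rfl⟩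

theorem ArcEdge.symm (hE : IsFolded E) (h : ArcEdge R k E u l v) : ArcEdge R k E v l⁻¹ u := by
  obtain ⟨a, i, h0, hi, rfl, rfl, rfl⟩ := h
  refine ⟨a.flip hE, a.length - (i + 1), by omega, by simp only [Arc.flip_length]; omega,
    (a.point_flip hE _).symm, ?_, ?_⟩
  · rw [Arc.flip_word, inverseWord]
    congr 2
    ring
  · rw [show a.length - (i + 1) + 1 = a.length - i by ring, a.point_flip]

theorem Arc.Agree.word_pred_eq {hE : IsFolded E} {a b : Arc R k E}
    (h : a.Agree i (b.flip hE) (b.length - j)) (hi : 0 < i) : a.word (i - 1) = (b.word j)⁻¹ := by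
  have := h.index_eq
  rw [h.word_eq (i - 1) (by omega) (by omega), Arc.flip_word, inverseWord]
  congr 2
  omega

theorem Arc.Agree.of_flip_succ {hE : IsFolded E} {a b : Arc R k E}
    (h : (a.flip hE).Agree (a.length - i) (b.flip hE) (b.length - j)) :
    (a.flip hE).Agree (a.length - (i + 1)) (b.flip hE) (b.length - (j + 1)) := by
  have := h.index_eq
  rw [show b.length - (j + 1) = a.length - (i + 1) by omega]
  rw [← h.index_eq] at h
  exact h.mono (by omega)

theorem ArcEdge.unique (hE : IsFolded E) (h : ArcEdge R k E u l v) (h' : ArcEdge R k E u l v') :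
    v = v' := by
  obtain ⟨a, i, h0i, hia, rfl, rfl, rfl⟩ := h
  obtain ⟨b, j, h0j, hjb, hu, hl, rfl⟩ := h'
  have hinterior : (0 < i ∧ i < a.length) ↔ (0 < j ∧ j < b.length) := by
    rw [← a.lt_stage_point_iff, ← b.lt_stage_point_iff, hu]
  rcases h0i.eq_or_lt with rfl | hi
  · obtain rfl : 0 = j := by omega
    have hagree : a.Agree 0 b 0 := ⟨by simpa using hu, rfl, fun x _ _ => by omega⟩
    exact (hagree.succ hl).point_eq hE (by omega)
  have hj : 0 < j := (hinterior.1 ⟨hi, hia⟩).1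
  rcases Arc.agree_of_point_eq hE hi hia hj hjb hu with h | h | h | h
  · exact (h.succ hl).point_eq hE (by omega)
  · have hred := R.reduced a.isRelator (i - 1)
    rw [sub_add_cancel, h.word_pred_eq hi, inv_inv, hl] at hred
    exact absurd rfl hred
  · have hred := R.reduced b.isRelator (j - 1)
    rw [sub_add_cancel, h.symm.word_pred_eq hj, inv_inv, hl] at hred
    exact absurd rfl hred
  · rw [← a.point_flip hE, ← b.point_flip hE]
    exact h.of_flip_succ.point_eq hE (by omega)

theorem IsStage.not_arcEdge (hS : IsStage R k E) (h : E u l v) : ¬ ArcEdge R k E u l v' := by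
  rintro ⟨a, i, h0, hi, rfl, rfl, rfl⟩
  rcases h0.eq_or_lt with rfl | h0
  · rw [a.point_zero] at h
    exact a.no_edge_source _ h
  · exact (a.lt_stage_point_iff.2 ⟨h0, hi⟩).not_ge (hS.stage_le h)

theorem IsStage.isFolded_next (hS : IsStage R k E) : IsFolded (Next R k E) where
  symm := Or.imp hS.symm (ArcEdge.symm hS.toIsFolded)
  unique := by
    rintro u l v v' (h | h) (h' | h')
    · exact hS.unique h h'
    · exact absurd h' (hS.not_arcEdge h)
    · exact absurd h (hS.not_arcEdge h')
    · exact h.unique hS.toIsFolded h'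

theorem IsStage.stage_le_of_next (hS : IsStage R k E) (h : Next R k E u l v) :
    u.stage ≤ k + 1 := by
  rcases h with h | ⟨a, i, -, -, rfl, -, -⟩
  · exact (hS.stage_le h).trans (Nat.le_succ k)
  · exact a.stage_point_le

theorem Arc.closesUp (a : Arc R k E) : ClosesUp (Next R k E) a.word a.period 0 a.source := by
  obtain ⟨γ, htarget, hsource, hγ⟩ := a.exists_return
  have hlength := a.length_pos
  have hle := a.length_le
  let δ i := if i ≤ a.length then a.point i else γ i
  have hδγ {i} (hi : a.length ≤ i) : δ i = γ i := by
    rcases hi.eq_or_lt with rfl | hi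
    · simp [δ, htarget]
    · simp [δ, hi.not_ge]
  have hδ0 : δ 0 = a.source := by simp [δ, hlength.le]
  rw [← hδ0]
  refine IsPath.closesUp (R.pos a.isRelator) (R.periodic a.isRelator) (fun i h0 hi => ?_)
    (by rw [hδγ hle, hsource, hδ0])
  rcases lt_or_ge i a.length with hi' | hi'
  · simpa [δ, hi'.le, Int.add_one_le_iff.2 hi'] using a.isPath_point i h0 hi'
  · rw [hδγ hi', hδγ (by omega)]
    exact Or.inl (hγ i hi' hi)

theorem IsStage.exists_arc (hS : IsStage R k E) (hf : R.IsRelator f n) (hu : u.stage ≤ k)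
    (h : ∀ v, ¬ E u (f 0) v) : ∃ a : Arc R k E, a.source = u ∧ a.word = f ∧ a.period = n := by
  have hnot : ¬ ClosesUp E (inverseWord n f) n 0 u := by
    intro hclose
    have hclose := hclose.inverse hS.toIsFolded n
    rw [inverseWord_inverseWord] at hclose
    obtain ⟨v, hv⟩ := hclose.exists_edge
    rw [sub_zero, ← zero_add n, R.periodic hf] at hv
    exact h v hv
  obtain ⟨γ, b, hγ0, hb0, hγ, hb, hstage, hmax⟩ :=
    hS.exists_maximal_path (R.inverse hf n) hu hnot
  have hreturn := hγ.inverse hS.toIsFolded n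
  rw [inverseWord_inverseWord, sub_zero] at hreturn
  refine ⟨⟨u, γ b, f, n, n - b, hf, hu, hstage, h, ?_, by omega, by omega, _, ?_, ?_, hreturn⟩,
    rfl, rfl, rfl⟩
  · rwa [show n - b - 1 = n - 1 - b by ring]
  · simp
  · simpa using hγ0

theorem IsStage.closesUp_next (hS : IsStage R k E) (hf : R.IsRelator f n) (hu : u.stage ≤ k)
    (i : ℤ) : ClosesUp (Next R k E) f n i u := by
  by_cases h : ClosesUp E f n i u
  · exact h.mono Or.inl
  obtain ⟨γ, b, rfl, hib, hγ, -, hstage, hmax⟩ := hS.exists_maximal_path hf hu h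
  obtain ⟨a, hsource, hword, hperiod⟩ := hS.exists_arc (R.shift hf b) hstage (by simpa using hmax)
  have hclose := a.closesUp
  rw [hsource, hword, hperiod, closesUp_shift_iff, zero_add] at hclose
  exact ((hγ.mono Or.inl).closesUp_iff hS.isFolded_next hib).2 hclose

end Next

/-! ### Runs along arcs -/

section Runs

variable {L : Type*} [InvolutiveInv L] {R : RelatorSystem L} {k : ℕ}
  {E : Vertex L → L → Vertex L → Prop} {f : ℤ → L} {γ : ℤ → Vertex L} {n s t d e : ℤ}
  {a b : Arc R k E}

/-- From time `s` to time `t`, the path `γ` reading `f` runs through the interior of the arc `a`,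
and at time `x` it is at the vertex of index `x + d`. -/
structure IsRun (f : ℤ → L) (γ : ℤ → Vertex L) (a : Arc R k E) (s t d : ℤ) : Prop where
  lt : s < t
  pos : 0 < s + d
  lt_length : t + d < a.length
  vertex_eq : ∀ x, s ≤ x → x ≤ t → γ x = a.point (x + d)
  word_eq : ∀ x, s ≤ x → x < t → f x = a.word (x + d)

theorem IsRun.closesUp (hS : IsStage R k E) (hf : R.IsRelator f n) (h : IsRun f γ a s t d)
    (hlong : n ≤ 5 * (t - s) ∨ a.period ≤ 5 * (t - s)) : ClosesUp (Next R k E) f n s (γ s) := by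
  obtain ⟨hword, hperiod⟩ := R.eq_of_agree (R.shift hf s) (R.shift a.isRelator (s + d)) hlong
    fun x hx hxt => by rw [h.word_eq (x + s) (by omega) (by omega), add_assoc]
  have hpath : IsPath (Next R k E) a.word a.point 0 (s + d) := fun x h0 hx =>
    a.isPath_point x h0 (by have := h.lt_length; have := h.lt; omega)
  have hclose := (hpath.closesUp_iff hS.isFolded_next h.pos.le).1 (a.point_zero ▸ a.closesUp)
  rw [← zero_add (s + d), ← closesUp_shift_iff, ← hword, ← hperiod, closesUp_shift_iff,
    zero_add, zero_add, ← h.vertex_eq s le_rfl h.lt.le] at hclose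
  exact hclose

theorem IsStage.exists_isRun_of_edge (hS : IsStage R k E)
    (hedge : Next R k E (γ t) (f t) (γ (t + 1)))
    (ht : k < (γ t).stage) (ht' : k < (γ (t + 1)).stage) :
    ∃ (a : Arc R k E) (d : ℤ), IsRun f γ a t (t + 1) d := by
  rcases hedge with hold | ⟨a, i, -, -, hi, hl, hi'⟩
  · exact absurd ht (hS.stage_le hold).not_gt
  · rw [hi, a.lt_stage_point_iff] at ht
    rw [hi', a.lt_stage_point_iff] at ht'
    refine ⟨a, i - t, by omega, by omega, by omega, fun x hx hxt => ?_, fun x hx hxt => ?_⟩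
    · rcases (by omega : x = t ∨ x = t + 1) with rfl | rfl
      · rw [hi, add_sub_cancel]
      · rw [hi', show t + 1 + (i - t) = i + 1 by ring]
    · obtain rfl : x = t := by omega
      rw [hl, add_sub_cancel]

theorem IsRun.extend (h : IsRun f γ a s t d) (hlength : t + 1 + d < a.length)
    (hvertex : γ (t + 1) = a.point (t + 1 + d)) (hword : f t = a.word (t + d)) :
    IsRun f γ a s (t + 1) d where
  lt := h.lt.trans (lt_add_one t)
  pos := h.pos
  lt_length := hlength
  vertex_eq x hx hxt := by
    rcases (by omega : x ≤ t ∨ x = t + 1) with hxt | rfl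
    · exact h.vertex_eq x hx hxt
    · exact hvertex
  word_eq x hx hxt := by
    rcases (by omega : x < t ∨ x = t) with hxt | rfl
    · exact h.word_eq x hx hxt
    · exact hword

theorem IsRun.of_agree (hE : IsFolded E) (h : IsRun f γ a s t d) (hlength : t + d < b.length)
    (hagree : a.Agree (t + d) b (t + d)) : IsRun f γ b s t d where
  lt := h.lt
  pos := h.pos
  lt_length := hlength
  vertex_eq x hx hxt := by
    have := h.pos
    rw [h.vertex_eq x hx hxt, (hagree.mono (by omega : x + d ≤ t + d)).point_eq hE (by omega)]
  word_eq x hx hxt := by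
    have := h.pos
    rw [h.word_eq x hx hxt, hagree.word_eq _ (by omega) (by omega)]

theorem IsRun.extend_of_agree (hE : IsFolded E) (ha : IsRun f γ a s t d)
    (hb : IsRun f γ b t (t + 1) e) (h : a.Agree (t + d) b (t + e)) : IsRun f γ b s (t + 1) d := by
  obtain rfl : d = e := by have := h.index_eq; omega
  have := hb.lt_length
  exact (ha.of_agree hE (by omega) h).extend hb.lt_length (hb.vertex_eq _ (by omega) le_rfl)
    (hb.word_eq t le_rfl hb.lt)

theorem IsRun.extend_of_agree_flip (hE : IsFolded E) (ha : IsRun f γ a s t d)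
    (hb : IsRun f γ b t (t + 1) e)
    (h : (a.flip hE).Agree (a.length - (t + d)) (b.flip hE) (b.length - (t + e))) :
    IsRun f γ a s (t + 1) d := by
  have hindex := h.index_eq
  have hblt := hb.lt_length
  refine ha.extend (by omega) ?_ ?_
  · rw [hb.vertex_eq (t + 1) (by omega) le_rfl, ← a.point_flip hE, ← b.point_flip hE]
    convert (h.of_flip_succ.point_eq hE (by omega)).symm using 2 <;> ring
  · have hword := h.word_eq (a.length - 1 - (t + d)) (by omega) (by omega)
    rw [Arc.flip_word, Arc.flip_word, inverseWord, inverseWord, inv_inj] at hword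
    rw [hb.word_eq t le_rfl hb.lt]
    convert hword.symm using 2 <;> omega

-- The relators of the two arcs differ, as `f` is reduced, and so they agree on a short word only.
theorem IsRun.turn (hE : IsFolded E) (hred : f t ≠ (f (t - 1))⁻¹) (ha : IsRun f γ a s t d)
    (hb : IsRun f γ b t (t + 1) e) (h : (a.flip hE).Agree (a.length - (t + d)) b (t + e)) :
    5 * (t + e) < a.period ∧ 5 * (t + e) < b.period := by
  have hindex := h.index_eq
  by_contra! hlong
  obtain ⟨hword, -⟩ := R.eq_of_agree (l := t + e) (a.flip hE).isRelator b.isRelator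
    (by rw [Arc.flip_period]; omega) fun x h0 hx => h.word_eq x h0 (by omega)
  have hletter := congrFun hword (t + e)
  rw [Arc.flip_word, inverseWord, ← hb.word_eq t le_rfl hb.lt,
    show a.length - 1 - (t + e) = t - 1 + d by omega,
    ← ha.word_eq (t - 1) (by have := ha.lt; omega) (by omega)] at hletter
  exact hred hletter.symm

theorem IsRun.extend_or_turn (hE : IsFolded E) (hred : f t ≠ (f (t - 1))⁻¹)
    (ha : IsRun f γ a s t d) (hb : IsRun f γ b t (t + 1) e) :
    (∃ c : Arc R k E, IsRun f γ c s (t + 1) d ∧ (5 * (s + d) < a.period → 5 * (s + d) < c.period)) ∨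
      (5 * (t + e) < a.period ∧ 5 * (t + e) < b.period ∧ t + d + (t + e) = a.length) := by
  have hpos := ha.pos
  have hst := ha.lt
  have hblt := hb.lt_length
  have hvertex : a.point (t + d) = b.point (t + e) := by
    rw [← ha.vertex_eq t hst.le le_rfl, hb.vertex_eq t le_rfl hb.lt.le]
  rcases Arc.agree_of_point_eq hE (by omega) ha.lt_length hb.pos (by omega) hvertex with
    h | h | h | h
  · refine Or.inl ⟨b, ha.extend_of_agree hE hb h, fun hlt => ?_⟩
    by_contra! hle
    have := R.eq_of_agree_left (l := s + d) b.isRelator a.isRelator hle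
      fun x h0 hx => (h.word_eq x h0 (by omega)).symm
    omega
  · refine absurd ?_ hred
    rw [hb.word_eq t le_rfl hb.lt, ha.word_eq (t - 1) (by omega) (by omega),
      sub_add_eq_add_sub, h.word_pred_eq (by omega), inv_inv]
  · have := h.index_eq
    obtain ⟨hda, hdb⟩ := ha.turn hE hred hb h
    exact Or.inr ⟨hda, hdb, by omega⟩
  · exact Or.inl ⟨a, ha.extend_of_agree_flip hE hb h, id⟩

theorem not_closesUp_of_isPath (hS : IsStage R k E) (hγ : IsPath (Next R k E) f γ s t)
    (h : ¬ ClosesUp (Next R k E) f n s (γ s)) {x : ℤ} (hx : s ≤ x) (hxt : x ≤ t) :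
    ¬ ClosesUp (Next R k E) f n x (γ x) := by
  have hγx : IsPath (Next R k E) f γ s x := fun y hy hyx => hγ y hy (by omega)
  rwa [← hγx.closesUp_iff hS.isFolded_next hx]

-- A path through new vertices that turned twice from an arc to another one would run along more
-- than `1/5` of a relator between the turns, since each turn costs less than `1/5` and the arc is
-- longer than `3/5`.
theorem IsStage.exists_isRun_cover (hS : IsStage R k E) (hf : R.IsRelator f n)
    (hγ : IsPath (Next R k E) f γ s t) (hnew : ∀ x, s ≤ x → x ≤ t → k < (γ x).stage)
    (hopen : ¬ ClosesUp (Next R k E) f n s (γ s)) (hst : s < t) :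
    (∃ (a : Arc R k E) (d : ℤ), IsRun f γ a s t d) ∨
      ∃ T, (∃ (a : Arc R k E) (d : ℤ), IsRun f γ a s T d) ∧
        ∃ (b : Arc R k E) (e : ℤ), IsRun f γ b T t e ∧ 5 * (T + e) < b.period := by
  rw [← Int.add_one_le_iff] at hst
  induction t, hst using Int.leInduction with
  | base =>
    exact Or.inl (hS.exists_isRun_of_edge (hγ s le_rfl (lt_add_one s)) (hnew s le_rfl (by omega))
      (hnew _ (by omega) le_rfl))
  | succ t hst ih =>
    obtain ⟨c, j, hc⟩ := hS.exists_isRun_of_edge (hγ t (by omega) (lt_add_one t))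
      (hnew t (by omega) (by omega)) (hnew _ (by omega) le_rfl)
    have hred : f t ≠ (f (t - 1))⁻¹ := by simpa using R.reduced hf (t - 1)
    rcases ih (fun x hx hxt => hγ x hx (by omega)) (fun x hx hxt => hnew x hx (by omega)) with
      ⟨a, d, ha⟩ | ⟨T, ha, b, e, hb, hbT⟩
    · rcases ha.extend_or_turn hS.toIsFolded hred hc with ⟨c', hc', -⟩ | ⟨-, hj, -⟩
      · exact Or.inl ⟨c', d, hc'⟩
      · exact Or.inr ⟨t, ⟨a, d, ha⟩, c, j, hc, hj⟩
    · rcases hb.extend_or_turn hS.toIsFolded hred hc with ⟨c', hc', hc'T⟩ | ⟨hbt, -, hlength⟩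
      · exact Or.inr ⟨T, ha, c', e, hc', hc'T hbT⟩
      · have hT := ha.choose_spec.choose_spec.lt
        have hTt := hb.lt
        have hlong := b.period_lt
        exact absurd (hb.closesUp hS hf (Or.inr (by omega)))
          (not_closesUp_of_isPath hS hγ hopen hT.le (by omega))

theorem IsStage.closesUp_of_isPath_next (hS : IsStage R k E) (hf : R.IsRelator f n)
    (hlong : 2 * n ≤ 5 * (t - s)) (hγ : IsPath (Next R k E) f γ s t) :
    ClosesUp (Next R k E) f n s (γ s) := by
  have hn := R.pos hf
  by_contra hopen
  have hopen' {x : ℤ} := not_closesUp_of_isPath hS hγ hopen (x := x)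
  have hnew (x : ℤ) (hx : s ≤ x) (hxt : x ≤ t) : k < (γ x).stage := by
    by_contra! hold
    exact hopen' hx hxt (hS.closesUp_next hf hold x)
  rcases hS.exists_isRun_cover hf hγ hnew hopen (by omega) with
    ⟨a, d, ha⟩ | ⟨T, ⟨a, d, ha⟩, b, e, hb, -⟩
  · exact hopen (ha.closesUp hS hf (Or.inl (by omega)))
  · by_cases hT : n ≤ 5 * (T - s)
    · exact hopen (ha.closesUp hS hf (Or.inl hT))
    · exact hopen' ha.lt.le hb.lt.le (hb.closesUp hS hf (Or.inl (by omega)))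

theorem IsStage.next (hS : IsStage R k E) : IsStage R (k + 1) (Next R k E) where
  toIsFolded := hS.isFolded_next
  stage_le := hS.stage_le_of_next
  closesUp_of_isPath := hS.closesUp_of_isPath_next

end Runs

/-! ### The limit graph -/

section Limit

variable {L : Type*} [InvolutiveInv L] {R : RelatorSystem L}
  {E : Vertex L → L → Vertex L → Prop} {f : ℤ → L} {n : ℤ}

/-- The graph obtained from `E` by attaching all arcs `k` times. -/
def iterNext (R : RelatorSystem L) (E : Vertex L → L → Vertex L → Prop) :
    ℕ → Vertex L → L → Vertex L → Prop
  | 0 => E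
  | k + 1 => Next R k (iterNext R E k)

/-- The union of the graphs `iterNext R E k`. -/
def limitGraph (R : RelatorSystem L) (E : Vertex L → L → Vertex L → Prop) (u : Vertex L) (l : L)
    (v : Vertex L) : Prop :=
  ∃ k, iterNext R E k u l v

theorem IsStage.iterNext (hE : IsStage R 0 E) : ∀ k, IsStage R k (iterNext R E k)
  | 0 => hE
  | k + 1 => (hE.iterNext k).next

theorem iterNext_mono {i j : ℕ} (hij : i ≤ j) {u v : Vertex L} {l : L}
    (h : iterNext R E i u l v) : iterNext R E j u l v := by
  induction j, hij using Nat.le_induction with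
  | base => exact h
  | succ j _ ih => exact Or.inl ih

theorem IsStage.isFolded_limitGraph (hE : IsStage R 0 E) : IsFolded (limitGraph R E) where
  symm := fun ⟨k, hk⟩ => ⟨k, (hE.iterNext k).symm hk⟩
  unique := fun ⟨i, hi⟩ ⟨j, hj⟩ => (hE.iterNext (max i j)).unique
    (iterNext_mono (le_max_left i j) hi) (iterNext_mono (le_max_right i j) hj)

theorem IsStage.closesUp_limitGraph (hE : IsStage R 0 E) (hf : R.IsRelator f n) (u : Vertex L) :
    ClosesUp (limitGraph R E) f n 0 u :=
  ((hE.iterNext u.stage).closesUp_next hf le_rfl 0).mono fun h => ⟨u.stage + 1, h⟩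

/-- The edges of the segment from `0` to `N` of the base line that lead forward, reading `w`. -/
def BaseStep (w : ℤ → L) (N : ℤ) (u : Vertex L) (l : L) (v : Vertex L) : Prop :=
  ∃ i, 0 ≤ i ∧ i < N ∧ u = .base i ∧ l = w i ∧ v = .base (i + 1)

/-- The graph consisting of the segment from `0` to `N` of the base line, on which one reads `w`. -/
def BaseEdge (w : ℤ → L) (N : ℤ) (u : Vertex L) (l : L) (v : Vertex L) : Prop :=
  BaseStep w N u l v ∨ BaseStep w N v l⁻¹ u

variable {w : ℤ → L} {N s t : ℤ} {γ : ℤ → Vertex L}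

omit [InvolutiveInv L] in
theorem BaseStep.eq_of_source_eq {u v v' : Vertex L} {l l' : L} (h : BaseStep w N u l v)
    (h' : BaseStep w N u l' v') : l = l' ∧ v = v' := by
  obtain ⟨i, -, -, rfl, rfl, rfl⟩ := h
  obtain ⟨j, -, -, hij, rfl, rfl⟩ := h'
  obtain rfl := Vertex.base.inj hij
  exact ⟨rfl, rfl⟩

omit [InvolutiveInv L] in
theorem BaseStep.eq_of_target_eq {u u' v : Vertex L} {l l' : L} (h : BaseStep w N u l v)
    (h' : BaseStep w N u' l' v) : l = l' ∧ u = u' := by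
  obtain ⟨i, -, -, rfl, rfl, rfl⟩ := h
  obtain ⟨j, -, -, rfl, rfl, hij⟩ := h'
  obtain rfl := add_right_cancel (Vertex.base.inj hij)
  exact ⟨rfl, rfl⟩

theorem BaseStep.not_reversed (hw : ∀ i, w (i + 1) ≠ (w i)⁻¹)
    {u v v' : Vertex L} {l : L} (h : BaseStep w N u l v) : ¬ BaseStep w N v' l⁻¹ u := by
  rintro ⟨j, -, -, rfl, hl, rfl⟩
  obtain ⟨i, -, -, hij, rfl, rfl⟩ := h
  obtain rfl := Vertex.base.inj hij
  exact hw j (by rw [← hl, inv_inv])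

theorem isFolded_baseEdge (hw : ∀ i, w (i + 1) ≠ (w i)⁻¹) : IsFolded (BaseEdge w N) where
  symm := by
    rintro u l v (h | h)
    · exact Or.inr (by rwa [inv_inv])
    · exact Or.inl h
  unique := by
    rintro u l v v' (h | h) (h' | h')
    · exact (h.eq_of_source_eq h').2
    · exact absurd h' (h.not_reversed hw)
    · exact absurd h (h'.not_reversed hw)
    · exact (h.eq_of_target_eq h').2

theorem IsPath.forward_or_backward (hf : ∀ i, f (i + 1) ≠ (f i)⁻¹)
    (hγ : IsPath (BaseEdge w N) f γ s t) (hst : s < t) :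
    IsPath (BaseStep w N) f γ s t ∨ IsPath (fun u l v => BaseStep w N v l⁻¹ u) f γ s t := by
  rw [← Int.add_one_le_iff] at hst
  induction t, hst using Int.leInduction with
  | base =>
    refine (hγ s le_rfl (lt_add_one s)).imp ?_ ?_ <;>
    · intro h i hi his
      obtain rfl : i = s := by omega
      exact h
  | succ t hst ih =>
    have hred : f t ≠ (f (t - 1))⁻¹ := by simpa using hf (t - 1)
    have hedge := hγ t (by omega) (lt_add_one t)
    have extend {E : Vertex L → L → Vertex L → Prop} (h : IsPath E f γ s t)
        (ht : E (γ t) (f t) (γ (t + 1))) : IsPath E f γ s (t + 1) := by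
      intro i hi hit
      rcases (by omega : i < t ∨ i = t) with hit | rfl
      · exact h i hi hit
      · exact ht
    rcases ih (fun i hi hit => hγ i hi (by omega)) with h | h <;>
      have hpred := h (t - 1) (by omega) (by omega) <;> rw [sub_add_cancel] at hpred
    · refine Or.inl (extend h (hedge.resolve_right fun hback => hred ?_))
      rw [(hpred.eq_of_target_eq hback).1, inv_inv]
    · exact Or.inr (extend h (hedge.resolve_left fun hforw => hred
        (hforw.eq_of_source_eq hpred).1))

omit [InvolutiveInv L] in
theorem IsPath.exists_eq_shift (hγ : IsPath (BaseStep w N) f γ s t) (hst : s < t) :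
    ∃ d, 0 ≤ s + d ∧ t + d ≤ N ∧ ∀ x, s ≤ x → x < t → f x = w (x + d) := by
  obtain ⟨i, h0, -, hγs, -, -⟩ := hγ s le_rfl hst
  have hvertex : ∀ x, s ≤ x → x ≤ t → γ x = .base (x + (i - s)) := by
    intro x hx
    induction x, hx using Int.leInduction with
    | base => exact fun _ => by simpa using hγs
    | succ x hx ih =>
      intro hxt
      obtain ⟨j, -, -, hj, -, hj'⟩ := hγ x hx (by omega)
      rw [ih (by omega), Vertex.base.injEq] at hj
      rw [hj', ← hj, add_right_comm]
  have hstep (x : ℤ) (hx : s ≤ x) (hxt : x < t) : x + (i - s) < N ∧ f x = w (x + (i - s)) := by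
    obtain ⟨j, -, hjN, hj, hfj, -⟩ := hγ x hx hxt
    rw [hvertex x hx hxt.le, Vertex.base.injEq] at hj
    rw [hj]
    exact ⟨hjN, hfj⟩
  exact ⟨i - s, by omega, by have := (hstep (t - 1) (by omega) (by omega)).1; omega,
    fun x hx hxt => (hstep x hx hxt).2⟩

theorem isStage_baseEdge (hw : ∀ i, w (i + 1) ≠ (w i)⁻¹)
    (hpiece : ∀ f n s t, R.IsRelator f n → 0 ≤ s → t ≤ N → (∀ x, s ≤ x → x < t → f x = w x) →
      5 * (t - s) < 2 * n) : IsStage R 0 (BaseEdge w N) where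
  toIsFolded := isFolded_baseEdge hw
  stage_le := by rintro u l v (⟨i, -, -, rfl, -, -⟩ | ⟨i, -, -, -, -, rfl⟩) <;> exact le_rfl
  closesUp_of_isPath := by
    intro f n γ s t hf hlong hγ
    have hn := R.pos hf
    have short {f : ℤ → L} {γ : ℤ → Vertex L} {s t : ℤ} (hf : R.IsRelator f n)
        (hγ : IsPath (BaseStep w N) f γ s t) (hst : s < t) : 5 * (t - s) < 2 * n := by
      obtain ⟨d, hs, ht, hfw⟩ := hγ.exists_eq_shift hst
      have := hpiece _ n (s + d) (t + d) (R.shift hf (-d)) hs ht fun x hx hxt => by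
        rw [hfw _ (by omega) (by omega), neg_add_cancel_right]
      omega
    rcases hγ.forward_or_backward (R.reduced hf) (by omega) with h | h
    · exact absurd (short hf h (by omega)) hlong.not_gt
    · have hinv : IsPath (BaseStep w N) (inverseWord 0 f) (fun i => γ (0 - i)) (0 - t) (0 - s) := by
        intro i hi hi'
        convert h (0 - 1 - i) (by omega) (by omega) using 2
        · ring
        · rfl
        · ring
      have := short (R.inverse hf 0) hinv (by omega)
      omega

/-- A geometric form of Greendlinger's lemma. -/
theorem exists_isFolded_closesUp (hw : ∀ i, w (i + 1) ≠ (w i)⁻¹)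
    (hpiece : ∀ f n s t, R.IsRelator f n → 0 ≤ s → t ≤ N → (∀ x, s ≤ x → x < t → f x = w x) →
      5 * (t - s) < 2 * n) :
    ∃ E : Vertex L → L → Vertex L → Prop, IsFolded E ∧
      (∀ f n, R.IsRelator f n → ∀ u, ClosesUp E f n 0 u) ∧ IsPath E w .base 0 N := by
  have hbase := isStage_baseEdge hw hpiece
  exact ⟨limitGraph R (BaseEdge w N), hbase.isFolded_limitGraph,
    fun f n hf u => hbase.closesUp_limitGraph hf u,
    fun i h0 hi => ⟨0, Or.inl ⟨i, h0, hi, rfl, rfl, rfl⟩⟩⟩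

end Limit

/-! ### Small cancellation families in free groups -/

section FreeGroup

variable {α ι : Type*}

/-- The letter `(x, true)` stands for the generator `x` and `(x, false)` for its inverse. -/
scoped instance : InvolutiveInv (α × Bool) where
  inv l := (l.1, !l.2)
  inv_inv l := by simp

theorem inv_letter (l : α × Bool) : l⁻¹ = (l.1, !l.2) := rfl

section Action

variable {V : Type*} {E : V → α × Bool → V → Prop} {f : ℤ → α × Bool} {γ : ℤ → V}

theorem IsFolded.exists_hom (hE : IsFolded E) (htotal : ∀ u l, ∃ v, E u l v) :
    ∃ φ : FreeGroup α →* Equiv.Perm V, ∀ {u l v}, E u l v → φ (FreeGroup.mk [l]) v = u := by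
  choose next hnext using htotal
  have next_next_inv (u : V) (l : α × Bool) : next (next u l) l⁻¹ = u :=
    hE.unique (hnext _ _) (hE.symm (hnext u l))
  let move (x : α) : Equiv.Perm V :=
    ⟨(next · (x, false)), (next · (x, true)), (next_next_inv · (x, false)),
      (next_next_inv · (x, true))⟩
  refine ⟨FreeGroup.lift move, fun {u l v} h => ?_⟩
  have hmove : next v l⁻¹ = u := hE.unique (hnext v l⁻¹) (hE.symm h)
  rcases l with ⟨x, _ | _⟩ <;> simpa [FreeGroup.lift_mk, move, inv_letter] using hmove

theorem letters_succ (f : ℤ → α × Bool) (k : ℕ) : letters f (k + 1 : ℕ) = letters f k ++ [f k] := by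
  simp [letters, List.range_succ]

theorem IsPath.hom_letters_apply {φ : FreeGroup α →* Equiv.Perm V}
    (hφ : ∀ {u l v}, E u l v → φ (FreeGroup.mk [l]) v = u) {k : ℕ} (h : IsPath E f γ 0 k) :
    φ (FreeGroup.mk (letters f k)) (γ k) = γ 0 := by
  induction k with
  | zero => simp [letters, ← FreeGroup.one_eq_mk]
  | succ k ih =>
    have hlast := hφ (h k (by omega) (by omega))
    rw [letters_succ, ← FreeGroup.mul_mk, map_mul, Equiv.Perm.mul_apply, Nat.cast_succ, hlast]
    exact ih fun i h0 hi => h i h0 (by omega)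

end Action

/-- A family of cyclically reduced words, encoded as periodic bi-infinite words, that satisfies the
small cancellation condition `C'(1/5)`: a common subword of two of them, or of one and the inverse
of another one, is shorter than `1/5` of each of them. -/
structure SmallCancellationFamily (ι α : Type*) where
  word : ι → ℤ → α × Bool
  length : ι → ℕ
  length_pos : ∀ ρ, 0 < length ρ
  periodic : ∀ ρ, Function.Periodic (word ρ) (length ρ)
  reduced : ∀ ρ i, word ρ (i + 1) ≠ (word ρ i)⁻¹
  eq_of_agree : ∀ {ρ ρ' : ι} {a b l : ℤ}, length ρ ≤ 5 * l →
    (∀ i, 0 ≤ i → i < l → word ρ (i + a) = word ρ' (i + b)) →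
      ρ = ρ' ∧ ∀ i, word ρ (i + a) = word ρ (i + b)
  not_agree_inverse : ∀ {ρ ρ' : ι} {a b l : ℤ}, length ρ ≤ 5 * l →
    ¬ ∀ i, 0 ≤ i → i < l → word ρ (i + a) = (word ρ' (b - i))⁻¹

namespace SmallCancellationFamily

variable (F : SmallCancellationFamily ι α) {s : Set ι} {ρ ρ₀ : ι} {f g : ℤ → α × Bool}
  {n m l b : ℤ}

/-- The element of the free group represented by a word of the family. -/
def relator (ρ : ι) : FreeGroup α := FreeGroup.mk (letters (F.word ρ) (F.length ρ))

/-- The cyclic conjugates of the words with index in `s` and of their inverses. -/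
def IsConjugate (s : Set ι) (f : ℤ → α × Bool) (n : ℤ) : Prop :=
  ∃ ρ ∈ s, n = F.length ρ ∧ ∃ k, f = (fun i => F.word ρ (i + k)) ∨ f = inverseWord k (F.word ρ)

variable {F}

theorem IsConjugate.inverse (hf : F.IsConjugate s f n) (k : ℤ) :
    F.IsConjugate s (inverseWord k f) n := by
  obtain ⟨ρ, hρ, hn, j, rfl | rfl⟩ := hf
  · refine ⟨ρ, hρ, hn, k + j, Or.inr (funext fun i => ?_)⟩
    rw [inverseWord, inverseWord]
    congr 2
    ring
  · refine ⟨ρ, hρ, hn, j - k, Or.inl (funext fun i => ?_)⟩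
    rw [inverseWord, inverseWord, inv_inv]
    congr 1
    ring

theorem IsConjugate.shift (hf : F.IsConjugate s f n) (k : ℤ) :
    F.IsConjugate s (fun i => f (i + k)) n := by
  convert (hf.inverse 0).inverse (-k) using 1
  funext i
  rw [inverseWord, inverseWord, inv_inv]
  congr 1
  ring

theorem IsConjugate.periodic (hf : F.IsConjugate s f n) : Function.Periodic f n := by
  obtain ⟨ρ, -, rfl, k, rfl | rfl⟩ := hf
  · exact (F.periodic ρ).add_const k
  · exact ((F.periodic ρ).const_sub (k - 1)).comp _

theorem IsConjugate.reduced (hf : F.IsConjugate s f n) (i : ℤ) : f (i + 1) ≠ (f i)⁻¹ := by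
  obtain ⟨ρ, -, -, k, rfl | rfl⟩ := hf
  · simpa only [add_right_comm] using F.reduced ρ (i + k)
  · intro h
    have hred := F.reduced ρ (k - 1 - (i + 1))
    rw [← inverseWord, h, inverseWord, inv_inv, sub_add_eq_sub_sub, sub_add_cancel] at hred
    exact hred rfl

theorem IsConjugate.eq_of_agree_shift (hf : F.IsConjugate s f n) (hl : n ≤ 5 * l)
    (h : ∀ i, 0 ≤ i → i < l → f i = F.word ρ (i + b)) :
    ρ ∈ s ∧ f = (fun i => F.word ρ (i + b)) ∧ n = F.length ρ := by
  obtain ⟨σ, hσ, rfl, k, rfl | rfl⟩ := hf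
  · obtain ⟨rfl, heq⟩ := F.eq_of_agree hl h
    exact ⟨hσ, funext heq, rfl⟩
  · refine absurd (fun i h0 hil => ?_)
      (F.not_agree_inverse (ρ' := ρ) (a := k - l) (b := l - 1 + b) hl)
    have hi := h (l - 1 - i) (by omega) (by omega)
    rw [inverseWord, inv_eq_iff_eq_inv] at hi
    convert hi using 3 <;> ring

theorem IsConjugate.eq_of_agree (hf : F.IsConjugate s f n) (hg : F.IsConjugate s g m)
    (hl : n ≤ 5 * l) (h : ∀ i, 0 ≤ i → i < l → f i = g i) : f = g ∧ n = m := by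
  obtain ⟨ρ, -, rfl, k, rfl | rfl⟩ := hg
  · exact (hf.eq_of_agree_shift hl h).2
  · obtain ⟨-, heq, hn⟩ := (hf.inverse l).eq_of_agree_shift (ρ := ρ) (b := k - l) hl
      fun i h0 hi => by
        rw [inverseWord, h _ (by omega) (by omega), inverseWord, inv_inv]
        congr 1
        ring
    refine ⟨?_, hn⟩
    rw [← inverseWord_inverseWord l f, heq]
    funext i
    rw [inverseWord, inverseWord]
    congr 2
    ring

variable (F) in
/-- The system of the cyclic conjugates of the words with index in `s` and of their inverses. -/
def relatorSystem (s : Set ι) : RelatorSystem (α × Bool) where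
  IsRelator := F.IsConjugate s
  pos := by
    rintro f n ⟨ρ, -, rfl, -⟩
    exact_mod_cast F.length_pos ρ
  periodic := IsConjugate.periodic
  reduced := IsConjugate.reduced
  shift := IsConjugate.shift
  inverse := IsConjugate.inverse
  eq_of_agree_left := IsConjugate.eq_of_agree

theorem exists_isConjugate_apply_zero (hs : ∀ x, ∃ ρ ∈ s, ∃ i, (F.word ρ i).1 = x)
    (l : α × Bool) : ∃ f n, F.IsConjugate s f n ∧ f 0 = l := by
  obtain ⟨ρ, hρ, i, hi⟩ := hs l.1
  by_cases hsign : (F.word ρ i).2 = l.2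
  · exact ⟨_, _, ⟨ρ, hρ, rfl, i, Or.inl rfl⟩, by rw [zero_add]; exact Prod.ext hi hsign⟩
  · refine ⟨_, _, ⟨ρ, hρ, rfl, i + 1, Or.inr rfl⟩, ?_⟩
    rw [inverseWord, add_sub_cancel_right, sub_zero, inv_letter]
    exact Prod.ext hi (Bool.eq_not_of_ne (Ne.symm hsign)).symm

theorem relator_notMem_normalClosure (hρ₀ : ρ₀ ∉ s)
    (hs : ∀ x, ∃ ρ ∈ s, ∃ i, (F.word ρ i).1 = x) :
    F.relator ρ₀ ∉ Subgroup.normalClosure (F.relator '' s) := by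
  obtain ⟨E, hE, hcloses, hpath⟩ := exists_isFolded_closesUp (R := F.relatorSystem s)
    (N := F.length ρ₀) (F.reduced ρ₀) fun f n a b hf _ _ h => by
      have hn := (F.relatorSystem s).pos hf
      by_contra! hlong
      exact hρ₀ (IsConjugate.eq_of_agree_shift (l := b - a) (b := a) (hf.shift a) (by omega)
        fun i h0 hi => h _ (by omega) (by omega)).1
  obtain ⟨φ, hφ⟩ := hE.exists_hom fun u l => by
    obtain ⟨f, n, hf, rfl⟩ := exists_isConjugate_apply_zero hs l
    exact (hcloses f n hf u).exists_edge
  have hker : F.relator '' s ⊆ φ.ker := by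
    rintro _ ⟨ρ, hρ, rfl⟩
    ext u
    obtain ⟨γ, rfl, hγ, hper⟩ := hcloses _ _ ⟨ρ, hρ, rfl, 0, Or.inl rfl⟩ u
    have := IsPath.hom_letters_apply hφ (k := F.length ρ) fun i _ _ => hγ i
    simpa [relator, hper.eq] using this
  intro hmem
  have hφρ₀ := hpath.hom_letters_apply hφ
  rw [← relator, MonoidHom.mem_ker.1 (Subgroup.normalClosure_le_normal hker hmem)] at hφρ₀
  have hlength : (F.length ρ₀ : ℤ) = 0 := Vertex.base.inj hφρ₀
  have := F.length_pos ρ₀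
  omega

end SmallCancellationFamily

end FreeGroup
/-! ### Words made of blocks -/

section Periodize

variable {L : Type*} {r : List L}

/-- The bi-infinite periodic word that repeats `r`, which is read from time `0` on. -/
def periodize (r : List L) (hr : r ≠ []) (i : ℤ) : L :=
  r[(i % r.length).toNat]'(by
    have hpos : (0 : ℤ) < r.length := by exact_mod_cast List.length_pos_of_ne_nil hr
    exact (Int.toNat_lt (Int.emod_nonneg i hpos.ne')).2 (Int.emod_lt_of_pos i hpos))

theorem periodic_periodize (hr : r ≠ []) : Function.Periodic (periodize r hr) r.length := by
  intro i
  simp only [periodize, Int.add_emod_right]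

theorem periodize_natCast (hr : r ≠ []) {i : ℕ} (hi : i < r.length) :
    periodize r hr i = r[i] := by
  simp only [periodize, ← Int.natCast_emod, Int.toNat_natCast, Nat.mod_eq_of_lt hi]

theorem letters_periodize (hr : r ≠ []) : letters (periodize r hr) r.length = r := by
  refine List.ext_getElem (by simp [letters]) fun i _ hi => ?_
  simpa [letters] using periodize_natCast hr hi

end Periodize

/-- The data of a word `h₀ y ^ e₀ h₁ y ^ e₁ ⋯` with `count` blocks `hₖ y ^ eₖ`, where `y` is `base`
and `eₖ` is `exponent k`. All headers `hₖ` are equal to `stem`, except that `h₀ = pre ++ stem`. -/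
structure BlockWord (α : Type*) where
  base : α
  pre : List (α × Bool)
  stem : List (α × Bool)
  exponent : ℕ → ℕ
  count : ℕ

namespace BlockWord

variable {α : Type*} (W : BlockWord α) {a : ℤ} {i j k : ℕ}

/-- The part of the block of index `k` that precedes the power of `W.base`. -/
def header (k : ℕ) : List (α × Bool) := if k = 0 then W.pre ++ W.stem else W.stem

/-- The block of index `k`. -/
def block (k : ℕ) : List (α × Bool) :=
  W.header k ++ List.replicate (W.exponent k) (W.base, true)

/-- The word formed by the first `k` blocks. -/
def initial (k : ℕ) : List (α × Bool) := (List.range k).flatMap W.block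

/-- The word formed by all blocks. -/
def toList : List (α × Bool) := W.initial W.count

/-- The conditions that make a block readable from any part of the word containing it. The bases of
all words are to satisfy `P`, and the blocks have length at most `M`. -/
structure IsAdmissible (P : α → Prop) (M : ℕ) : Prop where
  base_prop : P W.base
  stem_ne_nil : W.stem ≠ []
  ne_base : ∀ l ∈ W.pre ++ W.stem, l.1 ≠ W.base
  positive : ∀ l ∈ W.pre ++ W.stem, P l.1 → l.2 = true
  isChain : (W.pre ++ W.stem).IsChain fun l l' => l' ≠ l⁻¹ ∧ (l' = l → ¬ P l.1)
  exponent_pos : ∀ k, 0 < W.exponent k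
  two_le_exponent : ∀ k, 1 ≤ k → 2 ≤ W.exponent k
  one_lt_count : 1 < W.count
  length_block_le : ∀ k < W.count, (W.block k).length ≤ M
  lt_length : 15 * M < W.toList.length

theorem initial_succ (k : ℕ) : W.initial (k + 1) = W.initial k ++ W.block k := by
  simp [initial, List.range_succ]

theorem initial_isPrefix (h : j ≤ k) : W.initial j <+: W.initial k := by
  induction k, h using Nat.le_induction with
  | base => exact List.prefix_rfl
  | succ k _ ih => exact ih.trans (W.initial_succ k ▸ List.prefix_append _ _)

theorem length_block (k : ℕ) : (W.block k).length = (W.header k).length + W.exponent k := by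
  simp [block]

theorem header_of_pos (hk : 1 ≤ k) : W.header k = W.stem := if_neg (by omega)

variable {W} {P : α → Prop} {M : ℕ}

theorem header_isSuffix : W.header k <:+ W.pre ++ W.stem := by
  rw [header]
  split_ifs
  · exact List.suffix_rfl
  · exact List.suffix_append _ _

theorem stem_isSuffix_header : W.stem <:+ W.header k := by
  rw [header]
  split_ifs
  · exact List.suffix_append _ _
  · exact List.suffix_rfl

theorem sub_mul_le_length {e : ℕ} (h : ∀ k, i ≤ k → k < W.count → e ≤ (W.block k).length) :
    (W.count - i) * e ≤ W.toList.length := by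
  calc (W.count - i) * e = ∑ _k ∈ Finset.Ico i W.count, e := by simp
    _ ≤ ∑ k ∈ Finset.Ico i W.count, (W.block k).length :=
      Finset.sum_le_sum fun k hk => h k (Finset.mem_Ico.1 hk).1 (Finset.mem_Ico.1 hk).2
    _ ≤ ∑ k ∈ Finset.range W.count, (W.block k).length :=
      Finset.sum_le_sum_of_subset fun k hk => Finset.mem_range.2 (Finset.mem_Ico.1 hk).2
    _ = W.toList.length := List.length_flatMap.symm

theorem subset_toList (h : 0 < W.count) : W.pre ++ W.stem ⊆ W.toList :=
  fun _ hl => List.mem_flatMap.2 ⟨0, List.mem_range.2 h, List.mem_append_left _ hl⟩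

theorem IsAdmissible.toList_ne_nil (hW : W.IsAdmissible P M) : W.toList ≠ [] :=
  List.ne_nil_of_length_pos (by have := hW.lt_length; omega)

theorem IsAdmissible.length_header_pos (hW : W.IsAdmissible P M) : 0 < (W.header k).length := by
  refine List.length_pos_of_ne_nil ?_
  rw [header]
  split_ifs <;> simp [hW.stem_ne_nil]

/-- The bi-infinite word repeating the blocks of `W`. -/
def IsAdmissible.word (hW : W.IsAdmissible P M) : ℤ → α × Bool :=
  periodize W.toList hW.toList_ne_nil

/-- In the bi-infinite word repeating the blocks of `W`, the block of index `k` starts at time `a`.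
-/
def IsBlock (W : BlockWord α) (a : ℤ) (k : ℕ) : Prop :=
  k < W.count ∧ ∃ c : ℤ, a = (W.initial k).length + c * W.toList.length

theorem IsBlock.next (h : W.IsBlock a k) :
    W.IsBlock (a + (W.block k).length) (if k + 1 < W.count then k + 1 else 0) := by
  obtain ⟨hk, c, rfl⟩ := h
  have hsucc := congrArg List.length (W.initial_succ k)
  rw [List.length_append] at hsucc
  split_ifs with hk'
  · exact ⟨hk', c, by omega⟩
  · obtain hcount : W.count = k + 1 := by omega
    refine ⟨by omega, c + 1, ?_⟩
    rw [add_one_mul, toList, hcount, hsucc]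
    simp [initial]
    ring

theorem IsBlock.prev (h : W.IsBlock a (k + 1)) : W.IsBlock (a - (W.block k).length) k := by
  obtain ⟨hk, c, rfl⟩ := h
  have hsucc := congrArg List.length (W.initial_succ k)
  rw [List.length_append] at hsucc
  exact ⟨by omega, c, by omega⟩

theorem exists_isBlock_mem (hn : W.toList ≠ []) (x : ℤ) :
    ∃ a k, W.IsBlock a k ∧ a ≤ x ∧ x < a + (W.block k).length := by
  have key (i j : ℕ) (hij : i < (W.initial j).length) : ∃ k < j,
      (W.initial k).length ≤ i ∧ i < (W.initial k).length + (W.block k).length := by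
    induction j with
    | zero => simp [initial] at hij
    | succ j ih =>
      by_cases hi : i < (W.initial j).length
      · obtain ⟨k, hk, h⟩ := ih hi
        exact ⟨k, hk.trans j.lt_succ_self, h⟩
      · rw [initial_succ, List.length_append] at hij
        exact ⟨j, j.lt_succ_self, by omega, hij⟩
  have hpos : (0 : ℤ) < W.toList.length := by exact_mod_cast List.length_pos_of_ne_nil hn
  have hdiv := Int.emod_add_mul_ediv x W.toList.length
  have h0 := Int.emod_nonneg x hpos.ne'
  have hlt := Int.emod_lt_of_pos x hpos
  obtain ⟨k, hk, hle, hlt⟩ := key (x % W.toList.length).toNat W.count (by rw [← toList]; omega)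
  rw [mul_comm] at hdiv
  exact ⟨_, k, ⟨hk, x / W.toList.length, rfl⟩, by omega, by omega⟩

theorem IsAdmissible.exists_isBlock_window (hW : W.IsAdmissible P M) (s : ℤ) :
    ∃ a k, W.IsBlock a k ∧ 1 ≤ k ∧ s < a ∧ a + (W.block k).length ≤ s + 3 * M := by
  have hcount := hW.one_lt_count
  obtain ⟨a, k, h, hle, hlt⟩ := exists_isBlock_mem hW.toList_ne_nil s
  have hk := hW.length_block_le k h.1
  have hnext := h.next
  split_ifs at hnext with hlast
  · have := hW.length_block_le _ hlast
    exact ⟨_, _, hnext, by omega, hlt, by omega⟩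
  · have hnext' := hnext.next
    rw [if_pos (by omega)] at hnext'
    have := hW.length_block_le 0 (by omega)
    have := hW.length_block_le 1 (by omega)
    exact ⟨_, _, hnext', le_rfl, by omega, by rw [zero_add]; omega⟩

section Word

variable (hW : W.IsAdmissible P M) {x : ℤ}
include hW

theorem IsAdmissible.word_add_period (c x : ℤ) : hW.word (x + c * W.toList.length) = hW.word x :=
  (periodic_periodize hW.toList_ne_nil).int_mul c x

theorem IsBlock.word_add (h : W.IsBlock a k) (hi : i < (W.block k).length) :
    hW.word (a + i) = (W.block k)[i] := by
  obtain ⟨hk, c, rfl⟩ := h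
  have hle : W.initial (k + 1) <+: W.toList := W.initial_isPrefix hk
  have hsucc := W.initial_succ k
  have hlt : (W.initial k).length + i < (W.initial (k + 1)).length := by
    rw [hsucc, List.length_append]
    omega
  rw [add_right_comm, hW.word_add_period, ← Nat.cast_add, IsAdmissible.word,
    periodize_natCast _ (hlt.trans_le hle.length_le)]
  simp only [← hle.getElem hlt, hsucc, List.getElem_append_right (Nat.le_add_right _ _),
    Nat.add_sub_cancel_left]

theorem IsBlock.word_header (h : W.IsBlock a k) (hi : i < (W.header k).length) :
    hW.word (a + i) = (W.header k)[i] := by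
  rw [h.word_add hW (by rw [length_block]; omega)]
  exact List.getElem_append_left hi

theorem IsBlock.word_mem_header (h : W.IsBlock a k) (hx : a ≤ x)
    (hx' : x < a + (W.header k).length) : hW.word x ∈ W.header k := by
  obtain ⟨i, rfl⟩ := Int.le.dest hx
  rw [h.word_header hW (by omega)]
  exact List.getElem_mem _

theorem IsBlock.word_ne_base (h : W.IsBlock a k) (hx : a ≤ x)
    (hx' : x < a + (W.header k).length) : (hW.word x).1 ≠ W.base :=
  hW.ne_base _ (header_isSuffix.subset (h.word_mem_header hW hx hx'))

theorem IsBlock.word_eq_base (h : W.IsBlock a k) (hx : a + (W.header k).length ≤ x)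
    (hx' : x < a + (W.block k).length) : hW.word x = (W.base, true) := by
  obtain ⟨i, rfl⟩ := Int.le.dest hx
  rw [add_assoc, ← Nat.cast_add, h.word_add hW (by omega)]
  simp only [block, List.getElem_append_right (Nat.le_add_right _ _), List.getElem_replicate]

theorem IsBlock.word_end_ne_base (h : W.IsBlock a k) :
    (hW.word (a + (W.block k).length)).1 ≠ W.base :=
  h.next.word_ne_base hW le_rfl (lt_add_of_pos_right _ (by exact_mod_cast hW.length_header_pos))

theorem IsBlock.word_pred_eq_base (h : W.IsBlock a (k + 1)) : hW.word (a - 1) = (W.base, true) := by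
  have := hW.exponent_pos k
  have := W.length_block k
  exact h.prev.word_eq_base hW (by omega) (by omega)

-- Equal successive letters that satisfy `P` can only be found in the powers.
theorem IsAdmissible.mem_power_or_isChain (x : ℤ) :
    (∃ a k, W.IsBlock a k ∧ a + (W.header k).length ≤ x ∧ x + 1 < a + (W.block k).length) ∨
      (hW.word (x + 1) ≠ (hW.word x)⁻¹ ∧ (hW.word (x + 1) = hW.word x → ¬ P (hW.word x).1)) := by
  obtain ⟨a, k, h, hle, hlt⟩ := exists_isBlock_mem hW.toList_ne_nil x
  have hlength := W.length_block k
  have hexp := hW.exponent_pos k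
  by_cases hpower : a + (W.header k).length ≤ x ∧ x + 1 < a + (W.block k).length
  · exact Or.inl ⟨a, k, h, hpower⟩
  right
  by_cases hheader : x + 1 < a + (W.header k).length
  · obtain ⟨i, rfl⟩ := Int.le.dest hle
    have hchain := (hW.isChain.suffix (header_isSuffix (k := k))).getElem i (by omega)
    rwa [← h.word_header hW, ← h.word_header hW, Nat.cast_succ, ← add_assoc] at hchain
  · have hne : (hW.word (x + 1)).1 ≠ (hW.word x).1 := by
      by_cases hx : x < a + (W.header k).length
      · rw [h.word_eq_base hW (x := x + 1) (by omega) (by omega)]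
        exact (h.word_ne_base hW hle hx).symm
      · rw [h.word_eq_base hW (x := x) (by omega) (by omega),
          show x + 1 = a + (W.block k).length by omega]
        exact h.word_end_ne_base hW
    exact ⟨fun h => hne (by rw [h, inv_letter]), fun h => absurd (congrArg Prod.fst h) hne⟩

theorem IsAdmissible.word_reduced (x : ℤ) : hW.word (x + 1) ≠ (hW.word x)⁻¹ := by
  rcases hW.mem_power_or_isChain x with ⟨a, k, h, hle, hlt⟩ | h
  · rw [h.word_eq_base hW hle (by omega), h.word_eq_base hW (by omega) hlt]
    simp [inv_letter]
  · exact h.1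

theorem IsAdmissible.word_positive (x : ℤ) (hP : P (hW.word x).1) : (hW.word x).2 = true := by
  obtain ⟨a, k, h, hle, hlt⟩ := exists_isBlock_mem hW.toList_ne_nil x
  by_cases hx : x < a + (W.header k).length
  · exact hW.positive _ (header_isSuffix.subset (h.word_mem_header hW hle hx)) hP
  · rw [h.word_eq_base hW (by omega) hlt]

theorem IsAdmissible.exists_isBlock_of_square {z : α} (hP : P z) (hx : hW.word x = (z, true))
    (hx' : hW.word (x + 1) = (z, true)) : W.base = z ∧
      ∃ a k, W.IsBlock a k ∧ a + (W.header k).length ≤ x ∧ x + 1 < a + (W.block k).length := by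
  rcases hW.mem_power_or_isChain x with ⟨a, k, h, hle, hlt⟩ | h
  · refine ⟨?_, a, k, h, hle, hlt⟩
    rw [h.word_eq_base hW hle (by omega)] at hx
    exact congrArg Prod.fst hx
  · rw [hx, hx'] at h
    exact absurd hP (h.2 rfl)

end Word

section Agree

variable {W W' : BlockWord α} {M M' : ℕ} {d : ℤ}

-- The power in a block of `W` is a maximal power of the base, and so is the subword of `W'` that it
-- agrees with.
theorem IsBlock.exists_isBlock_of_agree (hW : W.IsAdmissible P M) (hW' : W'.IsAdmissible P M')
    (h : W.IsBlock a k) (hk : 1 ≤ k)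
    (hagree : ∀ x, a - 1 ≤ x → x ≤ a + (W.block k).length → hW.word x = hW'.word (x + d)) :
    W.base = W'.base ∧ ∃ b j, W'.IsBlock b j ∧ W.exponent k = W'.exponent j ∧
      a + (W.header k).length + d = b + (W'.header j).length := by
  have hlength := W.length_block k
  have hexp := hW.two_le_exponent k hk
  have hheader := hW.length_header_pos (k := k)
  have hpower (x : ℤ) (hx : a + (W.header k).length ≤ x) (hx' : x < a + (W.block k).length) :
      hW'.word (x + d) = (W.base, true) := by
    rw [← hagree x (by omega) (by omega), h.word_eq_base hW hx hx']
  obtain ⟨hbase, b, j, hb, hle, hlt⟩ := hW'.exists_isBlock_of_square hW.base_prop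
    (hpower (a + (W.header k).length) le_rfl (by omega))
    (by rw [add_right_comm]; exact hpower _ (by omega) (by omega))
  have hlength' := W'.length_block j
  have hstart : a + (W.header k).length + d = b + (W'.header j).length := by
    by_contra hne
    refine h.word_ne_base hW (x := a + (W.header k).length - 1) (by omega) (by omega) ?_
    rw [hagree _ (by omega) (by omega), hb.word_eq_base hW' (by omega) (by omega), hbase]
  refine ⟨hbase.symm, b, j, hb, le_antisymm ?_ ?_, hstart⟩
  · by_contra! hgt
    have hlast := hpower (b + (W'.block j).length - d) (by omega) (by omega)
    rw [sub_add_cancel] at hlast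
    exact hb.word_end_ne_base hW' (by rw [hlast, hbase])
  · by_contra! hgt
    refine h.word_end_ne_base hW ?_
    rw [hagree _ (by omega) le_rfl, hb.word_eq_base hW' (by omega) (by omega), hbase]

theorem IsBlock.stem_eq_of_agree (hW : W.IsAdmissible P M) (hW' : W'.IsAdmissible P M') {b : ℤ}
    (h : W.IsBlock a k) (h' : W'.IsBlock b k) (hk : 1 ≤ k) (hbase : W.base = W'.base)
    (hstart : a + (W.header k).length + d = b + (W'.header k).length)
    (hagree : ∀ x, a - 1 ≤ x → x ≤ a + (W.block k).length → hW.word x = hW'.word (x + d)) :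
    W.stem = W'.stem ∧ b = a + d := by
  obtain ⟨k, rfl⟩ := Nat.exists_eq_add_of_le' hk
  have hlength := W.length_block (k + 1)
  have hab : b = a + d := by
    rcases lt_trichotomy b (a + d) with hlt | heq | hgt
    · refine absurd ?_ (h'.word_ne_base hW' (x := a - 1 + d) (by omega) (by omega))
      rw [← hagree _ le_rfl (by omega), h.word_pred_eq_base hW, hbase]
    · exact heq
    · refine absurd ?_ (h.word_ne_base hW (x := b - d - 1) (by omega) (by omega))
      rw [hagree _ (by omega) (by omega), sub_right_comm, sub_add_cancel,
        h'.word_pred_eq_base hW', hbase]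
  refine ⟨?_, hab⟩
  rw [← W.header_of_pos hk, ← W'.header_of_pos hk]
  refine List.ext_getElem (by omega) fun i hi hi' => ?_
  rw [← h.word_header hW hi, ← h'.word_header hW' hi', hagree _ (by omega) (by omega), hab,
    add_right_comm]

end Agree

section Product

theorem mk_replicate (x : α) (n : ℕ) :
    FreeGroup.mk (List.replicate n (x, true)) = FreeGroup.of x ^ n := by
  classical
  rw [← FreeGroup.toWord_of_pow, FreeGroup.mk_toWord]

theorem mk_initial (W : BlockWord α) (hk : 1 ≤ k) :
    FreeGroup.mk (W.initial k) = FreeGroup.mk W.pre * ((List.range k).map fun j =>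
      FreeGroup.mk W.stem * FreeGroup.of W.base ^ W.exponent j).prod := by
  induction k, hk using Nat.le_induction with
  | base => simp [initial, block, header, ← FreeGroup.mul_mk, mk_replicate]
  | succ k hk ih =>
    simp [initial_succ, block, header_of_pos W hk, ← FreeGroup.mul_mk, mk_replicate, ih,
      List.range_succ, mul_assoc]

end Product

end BlockWord

/-- The data of a family of words that consists of block words and of powers of letters, together
with the conditions ensuring that any block of positive index identifies its word and its position
there. The predicate `P` holds for the bases of all powers. -/
structure BlockFamily (κ μ α : Type*) where
  P : α → Prop
  blockWord : κ → BlockWord α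
  bound : κ → ℕ
  letter : μ → α
  exponent : μ → ℕ
  isAdmissible : ∀ ρ, (blockWord ρ).IsAdmissible P (bound ρ)
  index_eq : ∀ {ρ σ k j}, k < (blockWord ρ).count → j < (blockWord σ).count →
    (blockWord ρ).base = (blockWord σ).base →
      (blockWord ρ).exponent k = (blockWord σ).exponent j → k = j
  eq_of_block_eq : ∀ {ρ σ k}, k < (blockWord ρ).count → k < (blockWord σ).count →
    (blockWord ρ).base = (blockWord σ).base → (blockWord ρ).stem = (blockWord σ).stem →
      (blockWord ρ).exponent k = (blockWord σ).exponent k → ρ = σ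
  letter_prop : ∀ i, P (letter i)
  letter_injective : Function.Injective letter
  five_lt_exponent : ∀ i, 5 < exponent i
  lt_exponent : ∀ {ρ i}, (blockWord ρ).base = letter i → 15 * bound ρ < exponent i

namespace BlockFamily

variable {κ μ α : Type*} (B : BlockFamily κ μ α) {ρ σ : κ} {i j : μ} {a b l : ℤ}

/-- The bi-infinite word repeating the word of index `t`. -/
def word : κ ⊕ μ → ℤ → α × Bool
  | .inl ρ => (B.isAdmissible ρ).word
  | .inr i => fun _ => (B.letter i, true)

/-- The length of the word of index `t`. -/
def length : κ ⊕ μ → ℕ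
  | .inl ρ => (B.blockWord ρ).toList.length
  | .inr i => B.exponent i

variable {B}

theorem word_positive (t : κ ⊕ μ) (x : ℤ) (h : B.P (B.word t x).1) : (B.word t x).2 = true := by
  rcases t with ρ | i
  · exact (B.isAdmissible ρ).word_positive x h
  · rfl

theorem exists_base_and_ne_base (hl : 15 * B.bound ρ < 5 * l) (a : ℤ) :
    (∃ x, 0 ≤ x ∧ x < l ∧ B.word (.inl ρ) (x + a) = ((B.blockWord ρ).base, true)) ∧
      ∃ x, 0 ≤ x ∧ x < l ∧ (B.word (.inl ρ) (x + a)).1 ≠ (B.blockWord ρ).base := by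
  have hW := B.isAdmissible ρ
  obtain ⟨b, k, h, -, hab, hb⟩ := hW.exists_isBlock_window a
  have := (B.blockWord ρ).length_block k
  have := hW.exponent_pos k
  have := hW.length_header_pos (k := k)
  refine ⟨⟨b + ((B.blockWord ρ).header k).length - a, by omega, by omega, ?_⟩,
    ⟨b - a, by omega, by omega, ?_⟩⟩
  · rw [sub_add_cancel]
    exact h.word_eq_base hW le_rfl (by omega)
  · rw [sub_add_cancel]
    exact h.word_ne_base hW le_rfl (by omega)

theorem exists_prop (t : κ ⊕ μ) (hl : B.length t ≤ 5 * l) (a : ℤ) :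
    ∃ x, 0 ≤ x ∧ x < l ∧ B.P (B.word t (x + a)).1 := by
  rcases t with ρ | i
  · have := (B.isAdmissible ρ).lt_length
    obtain ⟨⟨x, h0, hx, h⟩, -⟩ := exists_base_and_ne_base (B := B) (ρ := ρ) (l := l)
      (by rw [length] at hl; omega) a
    exact ⟨x, h0, hx, by rw [h]; exact (B.isAdmissible ρ).base_prop⟩
  · have := B.five_lt_exponent i
    exact ⟨0, le_rfl, by rw [length] at hl; omega, B.letter_prop i⟩

theorem not_agree_inverse {t t' : κ ⊕ μ} (hl : B.length t ≤ 5 * l) :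
    ¬ ∀ x, 0 ≤ x → x < l → B.word t (x + a) = (B.word t' (b - x))⁻¹ := by
  intro h
  obtain ⟨x, h0, hx, hP⟩ := exists_prop t hl a
  have hpos := word_positive t _ hP
  rw [h x h0 hx, inv_letter] at hP hpos
  simp [word_positive t' _ hP] at hpos

theorem eq_of_agree_block (hl : B.length (.inl ρ) ≤ 5 * l)
    (h : ∀ x, 0 ≤ x → x < l → B.word (.inl ρ) (x + a) = B.word (.inl σ) (x + b)) :
    ρ = σ ∧ ∀ x, B.word (.inl ρ) (x + a) = B.word (.inl ρ) (x + b) := by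
  have hW := B.isAdmissible ρ
  have hW' := B.isAdmissible σ
  have := hW.lt_length
  obtain ⟨c, k, hc, hk, hac, hcl⟩ := hW.exists_isBlock_window a
  have hagree (x : ℤ) (hx : c - 1 ≤ x)
      (hx' : x ≤ c + ((B.blockWord ρ).block k).length) : hW.word x = hW'.word (x + (b - a)) := by
    have := h (x - a) (by omega) (by rw [length] at hl; omega)
    rwa [sub_add_cancel, sub_add_eq_add_sub, add_sub_assoc] at this
  obtain ⟨hbase, e, j, he, hexp, hstart⟩ := hc.exists_isBlock_of_agree hW hW' hk hagree
  obtain rfl : k = j := B.index_eq hc.1 he.1 hbase hexp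
  obtain ⟨hstem, hec⟩ := hc.stem_eq_of_agree hW hW' he hk hbase hstart hagree
  obtain rfl : ρ = σ := B.eq_of_block_eq hc.1 he.1 hbase hstem hexp
  refine ⟨rfl, fun x => ?_⟩
  obtain ⟨-, m, hm⟩ := hc
  obtain ⟨-, m', hm'⟩ := he
  have hba : b = a + (m' - m) * (B.blockWord ρ).toList.length := by
    rw [sub_mul]
    omega
  rw [hba, ← add_assoc]
  exact (hW.word_add_period _ _).symm

theorem not_agree_block_power (hl : B.length (.inl ρ) ≤ 5 * l) :
    ¬ ∀ x, 0 ≤ x → x < l → B.word (.inl ρ) (x + a) = B.word (.inr i) (x + b) := by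
  intro h
  have := (B.isAdmissible ρ).lt_length
  obtain ⟨⟨x, hx0, hx, hbase⟩, y, hy0, hy, hne⟩ := exists_base_and_ne_base (B := B) (ρ := ρ)
    (l := l) (by rw [length] at hl; omega) a
  rw [h x hx0 hx] at hbase
  rw [h y hy0 hy] at hne
  exact hne (congrArg Prod.fst hbase)

theorem not_agree_power_block (hl : B.length (.inr i) ≤ 5 * l) :
    ¬ ∀ x, 0 ≤ x → x < l → B.word (.inr i) (x + a) = B.word (.inl ρ) (x + b) := by
  intro h
  have := B.five_lt_exponent i
  rw [length] at hl
  obtain ⟨hbase, -⟩ := (B.isAdmissible ρ).exists_isBlock_of_square (B.letter_prop i)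
    (h 0 le_rfl (by omega)).symm (by rw [add_right_comm]; exact (h 1 (by omega) (by omega)).symm)
  have := B.lt_exponent hbase
  obtain ⟨-, x, h0, hx, hne⟩ := exists_base_and_ne_base (B := B) (ρ := ρ) (l := l) (by omega) b
  rw [← h x h0 hx] at hne
  exact hne hbase.symm

variable (B) in
/-- The words of `B`, repeated periodically. -/
def toSmallCancellationFamily : SmallCancellationFamily (κ ⊕ μ) α where
  word := B.word
  length := B.length
  length_pos := by
    rintro (ρ | i)
    · exact List.length_pos_of_ne_nil (B.isAdmissible ρ).toList_ne_nil
    · exact (by omega : 0 < 5).trans (B.five_lt_exponent i)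
  periodic := by
    rintro (ρ | i)
    · exact periodic_periodize (B.isAdmissible ρ).toList_ne_nil
    · exact fun _ => rfl
  reduced := by
    rintro (ρ | i) x
    · exact (B.isAdmissible ρ).word_reduced x
    · simp [word, inv_letter]
  eq_of_agree := by
    rintro (ρ | i) (σ | j) a b l hl h
    · exact (eq_of_agree_block hl h).imp_left (congrArg Sum.inl)
    · exact absurd h (not_agree_block_power hl)
    · exact absurd h (not_agree_power_block hl)
    · have := B.five_lt_exponent i
      have := h 0 le_rfl (by rw [length] at hl; omega)
      exact ⟨congrArg Sum.inr (B.letter_injective (congrArg Prod.fst this)), fun _ => rfl⟩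
  not_agree_inverse := not_agree_inverse

theorem relator_inl (ρ : κ) :
    B.toSmallCancellationFamily.relator (.inl ρ) = FreeGroup.mk (B.blockWord ρ).toList :=
  congrArg FreeGroup.mk (letters_periodize (B.isAdmissible ρ).toList_ne_nil)

theorem relator_inr (i : μ) :
    B.toSmallCancellationFamily.relator (.inr i) = FreeGroup.of (B.letter i) ^ B.exponent i := by
  rw [← BlockWord.mk_replicate]
  simp [SmallCancellationFamily.relator, toSmallCancellationFamily, letters, word, length]

theorem exists_word_inl {x : α × Bool} (hx : x ∈ (B.blockWord ρ).toList) :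
    ∃ y, B.word (.inl ρ) y = x := by
  obtain ⟨y, hy, rfl⟩ := List.mem_iff_getElem.1 hx
  exact ⟨y, periodize_natCast (B.isAdmissible ρ).toList_ne_nil hy⟩

end BlockFamily

/-! ### The group of a structure -/

section Products

variable {G H : Type*} [Group G] [Group H] (f : G →* H)

theorem map_chainProd (lo : ℕ) (x y : G) :
    f (chainProd lo x y) = chainProd lo (f x) (f y) := by
  simp only [chainProd, map_list_prod, List.map_map, Function.comp_def, map_mul, map_pow]

theorem map_wProd (m : ℕ) {n : ℕ} (xs : Fin n → G) (y : G) :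
    f (wProd m xs y) = wProd m (fun i => f (xs i)) (f y) := by
  simp only [wProd, map_list_prod, List.map_map, List.map_ofFn, Function.comp_def, map_mul, map_pow]

theorem wProd_eq_mul (m : ℕ) {n : ℕ} (xs : Fin n → G) (y : G) :
    wProd m xs y =
      ((List.range 50).map fun k => (List.ofFn xs).prod * y ^ (100 * m + 0 + k + 1)).prod *
        ((List.range 50).map fun k => (List.ofFn xs).prod * y ^ (100 * m + 50 + k + 1)).prod := by
  rw [wProd, show List.range 100 = List.range (50 + 50) from rfl, List.range_add, List.map_append,
    List.prod_append, List.map_map]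
  simp only [Function.comp_def, add_zero, ← add_assoc]

end Products

/-- An atomic term or an atomic formula whose variables are replaced by elements of the structure:
a symbol applied to a tuple. -/
structure Atom (S : IndexedStructure) where
  symbol : ℕ
  one_le_symbol : 1 ≤ symbol
  args : Fin (S.arity symbol) → S.A

/-- The generators of `G(𝒜)` together with an additional generator for each atom `t`, which stands
for the value of the first half of the word `w_m` at `t` and cuts the relator of `t` into two. Each
of the two pieces is a block word, whether or not a value of `t` cancels with an argument. -/
abbrev Letter (S : IndexedStructure) : Type := GenSym S.A ⊕ Atom S

variable {S : IndexedStructure} {x y : GenSym S.A} {t : Atom S} {l : Letter S × Bool}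

/-- The letters `b`, `c`, `d`, `f₁`, `f₂`, whose powers separate the blocks of the relators. -/
inductive IsBase : Letter S → Prop
  | b : IsBase (.inl .b)
  | c : IsBase (.inl .c)
  | d : IsBase (.inl .d)
  | f1 : IsBase (.inl .f1)
  | f2 : IsBase (.inl .f2)

/-- The letters whose powers have square exponents in the relators. -/
def IsChainBase (y : GenSym S.A) : Prop := IsBase (S := S) (.inl y) ∧ y ≠ .b

/-- The number `lo` of the relators `chainProd lo x y` with the given `x`. -/
def offset : GenSym S.A → ℕ
  | .elt _ => 0
  | .b => 1000
  | .c => 2000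
  | .d => 3000
  | .f1 => 4000
  | .f2 => 4000

/-- The word of `chainProd (offset x) x y`. -/
def chainWord (x y : GenSym S.A) : BlockWord (Letter S) where
  base := .inl y
  pre := []
  stem := [(.inl x, true)]
  exponent k := (offset x + k + 1) ^ 2
  count := 1000

/-- The word `a₁⋯aₙ` of the arguments of `t`. -/
def Atom.argsWord (t : Atom S) : List (Letter S × Bool) :=
  List.ofFn fun i => (.inl (.elt (t.args i)), true)

open Classical in
/-- The inverse of the value of `t`, when the symbol of `t` is a function symbol. -/
noncomputable def Atom.invValue (t : Atom S) : List (Letter S × Bool) :=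
  if S.isFunc t.symbol then [(.inl (.elt (S.funcInterp t.symbol t.args)), false)] else []

/-- Half of the word `w_m` at `t`, starting from the power of `b` of exponent `100 m + s + 1`,
preceded by `pre`. -/
def Atom.halfWord (t : Atom S) (s : ℕ) (pre : List (Letter S × Bool)) : BlockWord (Letter S) where
  base := .inl .b
  pre := pre
  stem := t.argsWord
  exponent k := 100 * t.symbol + s + k + 1
  count := 50

/-- The block words among the relators: the words `chainProd`, and the two halves of the relator
of each atom. -/
inductive BlockIndex (S : IndexedStructure) : Type
  | chain (x y : GenSym S.A) (hne : x ≠ y) (hy : IsChainBase y)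
  | firstHalf (t : Atom S)
  | secondHalf (t : Atom S)

/-- The block word of the given index. -/
noncomputable def blockWord : BlockIndex S → BlockWord (Letter S)
  | .chain x y _ _ => chainWord x y
  | .firstHalf t => t.halfWord 0 [(.inr t, false)]
  | .secondHalf t => t.halfWord 50 (t.invValue ++ [(.inr t, true)])

/-- An upper bound for the lengths of the blocks. -/
def blockBound : BlockIndex S → ℕ
  | .chain x _ _ _ => (offset x + 1000) ^ 2 + 1
  | .firstHalf t => S.arity t.symbol + 100 * t.symbol + 102
  | .secondHalf t => S.arity t.symbol + 100 * t.symbol + 102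

@[simp]
theorem not_isBase_elt (a : S.A) : ¬ IsBase (S := S) (.inl (.elt a)) := nofun

@[simp]
theorem not_isBase_atom (t : Atom S) : ¬ IsBase (.inr t) := nofun

theorem offset_le (x : GenSym S.A) : offset x ≤ 4000 := by cases x <;> simp [offset]

theorem thousand_dvd_offset (x : GenSym S.A) : 1000 ∣ offset x := by
  cases x <;> norm_num [offset]

theorem Atom.invValue_of_isFunc (h : S.isFunc t.symbol) :
    t.invValue = [(.inl (.elt (S.funcInterp t.symbol t.args)), false)] := if_pos h

theorem Atom.invValue_of_not_isFunc (h : ¬ S.isFunc t.symbol) : t.invValue = [] := if_neg h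

theorem Atom.mem_argsWord : l ∈ t.argsWord ↔ ∃ i, (.inl (.elt (t.args i)), true) = l :=
  List.mem_ofFn

theorem Atom.not_isBase_of_mem_argsWord (hl : l ∈ t.argsWord) : ¬ IsBase l.1 := by
  obtain ⟨i, rfl⟩ := mem_argsWord.1 hl
  rintro ⟨⟩

theorem Atom.length_argsWord : t.argsWord.length = S.arity t.symbol := List.length_ofFn

theorem Atom.argsWord_ne_nil : t.argsWord ≠ [] :=
  List.ne_nil_of_length_pos (by
    rw [length_argsWord]
    exact S.arity_pos _ t.one_le_symbol)

theorem isAdmissible_chainWord (hne : x ≠ y) (hy : IsChainBase y) :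
    (chainWord x y).IsAdmissible IsBase ((offset x + 1000) ^ 2 + 1) where
  base_prop := hy.1
  stem_ne_nil := by simp [chainWord]
  ne_base := by simpa [chainWord] using hne
  positive := by simp [chainWord]
  isChain := by simp [chainWord]
  exponent_pos k := by simp [chainWord]
  two_le_exponent k hk :=
    (by norm_num : 2 ≤ 2 ^ 2).trans (Nat.pow_le_pow_left (by omega) 2)
  one_lt_count := by simp [chainWord]
  length_block_le k hk := by
    have : (offset x + k + 1) ^ 2 ≤ (offset x + 1000) ^ 2 :=
      Nat.pow_le_pow_left (by simp only [chainWord] at hk; omega) 2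
    simpa [BlockWord.length_block, BlockWord.header, chainWord, add_comm] using this
  lt_length := by
    have := BlockWord.sub_mul_le_length (W := chainWord x y) (i := 500)
      (e := (offset x + 501) ^ 2) fun k hk _ => by
        rw [BlockWord.length_block]
        exact le_add_left (Nat.pow_le_pow_left (by omega) 2)
    refine lt_of_lt_of_le ?_ this
    simp only [chainWord, Nat.reduceSub]
    ring_nf
    omega

theorem Atom.isAdmissible_halfWord {s : ℕ} {pre : List (Letter S × Bool)} (hs : s ≤ 50)
    (hlength : pre.length ≤ 2) (hpre : ∀ l ∈ pre, ¬ IsBase l.1)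
    (hchain : (pre ++ t.argsWord).IsChain fun l l' => l' ≠ l⁻¹) :
    (t.halfWord s pre).IsAdmissible IsBase (S.arity t.symbol + 100 * t.symbol + 102) := by
  have hnot : ∀ l ∈ pre ++ t.argsWord, ¬ IsBase l.1 := fun l hl =>
    (List.mem_append.1 hl).elim (hpre l) not_isBase_of_mem_argsWord
  have hargs := t.length_argsWord
  have := t.one_le_symbol
  refine ⟨.b, argsWord_ne_nil, fun l hl h => hnot l hl (h ▸ .b), fun l hl h => absurd h (hnot l hl),
    ?_, fun _ => Nat.succ_pos _, fun k hk => ?_, by simp [halfWord], fun k hk => ?_, ?_⟩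
  · exact hchain.imp_of_mem_imp fun l _ hl _ h => ⟨h, fun _ => hnot l hl⟩
  · simp only [halfWord]
    omega
  · have := (BlockWord.header_isSuffix (W := t.halfWord s pre) (k := k)).length_le
    rw [BlockWord.length_block]
    simp only [halfWord, List.length_append] at hk this ⊢
    omega
  · have := BlockWord.sub_mul_le_length (W := t.halfWord s pre) (i := 0)
      (e := S.arity t.symbol + 100 * t.symbol + 1) fun k _ _ => by
        have := (BlockWord.stem_isSuffix_header (W := t.halfWord s pre) (k := k)).length_le
        rw [BlockWord.length_block]
        simp only [halfWord] at this ⊢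
        omega
    simp only [halfWord] at this ⊢
    omega

theorem Atom.isChain_argsWord : t.argsWord.IsChain fun l l' => l' ≠ l⁻¹ := by
  refine (List.pairwise_of_forall_mem_list fun l hl l' hl' => ?_).isChain
  obtain ⟨i, rfl⟩ := mem_argsWord.1 hl
  obtain ⟨i', rfl⟩ := mem_argsWord.1 hl'
  simp [inv_letter]

theorem Atom.isChain_cons_argsWord (ε : Bool) :
    (((.inr t, ε) : Letter S × Bool) :: t.argsWord).IsChain fun l l' => l' ≠ l⁻¹ := by
  refine List.isChain_cons.2 ⟨fun l hl => ?_, isChain_argsWord⟩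
  obtain ⟨i, rfl⟩ := mem_argsWord.1 (List.mem_of_mem_head? hl)
  simp [inv_letter]

theorem isAdmissible_blockWord (ρ : BlockIndex S) :
    (blockWord ρ).IsAdmissible IsBase (blockBound ρ) := by
  rcases ρ with ⟨x, y, hne, hy⟩ | t | t
  · exact isAdmissible_chainWord hne hy
  · exact t.isAdmissible_halfWord (by simp) (by simp) (by simp) (t.isChain_cons_argsWord false)
  · by_cases h : S.isFunc t.symbol
    · rw [blockWord, Atom.invValue_of_isFunc h]
      exact t.isAdmissible_halfWord le_rfl (by simp) (by simp)
        (List.isChain_cons_cons.2 ⟨by simp [inv_letter], t.isChain_cons_argsWord true⟩)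
    · rw [blockWord, Atom.invValue_of_not_isFunc h]
      exact t.isAdmissible_halfWord le_rfl (by simp) (by simp) (t.isChain_cons_argsWord true)

theorem Atom.eq_of_argsWord_eq {t t' : Atom S} (h : t.symbol = t'.symbol)
    (hargs : t.argsWord = t'.argsWord) : t = t' := by
  rcases t with ⟨m, hm, as⟩
  rcases t' with ⟨m', hm', as'⟩
  obtain rfl : m = m' := h
  congr
  funext i
  simpa using congrFun (List.ofFn_injective hargs) i

theorem chainWord_exponent_inj {x' y' : GenSym S.A} {k j : ℕ} (hk : k < 1000) (hj : j < 1000)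
    (h : (chainWord x y).exponent k = (chainWord x' y').exponent j) : k = j := by
  have := Nat.pow_left_injective two_ne_zero h
  have := thousand_dvd_offset x
  have := thousand_dvd_offset x'
  omega

theorem blockWord_exponent_inj {ρ σ : BlockIndex S} {k j : ℕ} (hk : k < (blockWord ρ).count)
    (hj : j < (blockWord σ).count) (hbase : (blockWord ρ).base = (blockWord σ).base)
    (hexp : (blockWord ρ).exponent k = (blockWord σ).exponent j) : k = j := by
  rcases ρ with ⟨x, y, hne, hy⟩ | t | t <;> rcases σ with ⟨x', y', hne', hy'⟩ | t' | t'
  · exact chainWord_exponent_inj hk hj hexp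
  all_goals try exact absurd (Sum.inl_injective hbase) hy.2
  all_goals try exact absurd (Sum.inl_injective hbase).symm hy'.2
  all_goals
    simp only [blockWord, Atom.halfWord] at hk hj hexp
    omega

theorem eq_of_block_eq {ρ σ : BlockIndex S} {k : ℕ} (hk : k < (blockWord ρ).count)
    (hj : k < (blockWord σ).count) (hbase : (blockWord ρ).base = (blockWord σ).base)
    (hstem : (blockWord ρ).stem = (blockWord σ).stem)
    (hexp : (blockWord ρ).exponent k = (blockWord σ).exponent k) : ρ = σ := by
  rcases ρ with ⟨x, y, hne, hy⟩ | t | t <;> rcases σ with ⟨x', y', hne', hy'⟩ | t' | t'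
  · simp only [blockWord, chainWord, List.cons.injEq, Prod.mk.injEq, Sum.inl.injEq] at hbase hstem
    obtain ⟨⟨rfl, -⟩, -⟩ := hstem
    subst hbase
    rfl
  all_goals try exact absurd (Sum.inl_injective hbase) hy.2
  all_goals try exact absurd (Sum.inl_injective hbase).symm hy'.2
  all_goals simp only [blockWord, Atom.halfWord] at hk hj hexp
  · exact congrArg _ (Atom.eq_of_argsWord_eq (by omega) hstem)
  · omega
  · omega
  · exact congrArg _ (Atom.eq_of_argsWord_eq (by omega) hstem)

variable {p : Fin 2 → ℕ} (hp : ∀ i, 4 * 10 ^ 8 ≤ p i)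

variable (S) in
/-- The block words together with the two powers `f₁ ^ p 0` and `f₂ ^ p 1`. -/
noncomputable def blockFamily : BlockFamily (BlockIndex S) (Fin 2) (Letter S) where
  P := IsBase
  blockWord := blockWord
  bound := blockBound
  letter := ![.inl .f1, .inl .f2]
  exponent := p
  isAdmissible := isAdmissible_blockWord
  index_eq := blockWord_exponent_inj
  eq_of_block_eq := eq_of_block_eq
  letter_prop := Fin.forall_fin_two.2 ⟨.f1, .f2⟩
  letter_injective := by
    intro i j
    fin_cases i <;> fin_cases j <;> simp
  five_lt_exponent i := by linarith [hp i]
  lt_exponent {ρ i} hbase := by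
    rcases ρ with ⟨x, y, hne, hy⟩ | t | t
    · have : (offset x + 1000) ^ 2 ≤ 5000 ^ 2 :=
        Nat.pow_le_pow_left (by linarith [offset_le x]) 2
      simp only [blockBound]
      linarith [hp i]
    all_goals fin_cases i <;> simp [blockWord, Atom.halfWord] at hbase

theorem mk_chainWord (x y : GenSym S.A) : FreeGroup.mk (chainWord x y).toList =
    FreeGroup.map Sum.inl (chainProd (offset x) (FreeGroup.of x) (FreeGroup.of y)) := by
  rw [BlockWord.toList, BlockWord.mk_initial _ (by simp [chainWord]), map_chainProd]
  simp only [chainWord, chainProd, FreeGroup.map.of, ← FreeGroup.one_eq_mk, one_mul]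
  rfl

theorem Atom.mk_argsWord (t : Atom S) : FreeGroup.mk t.argsWord =
    (List.ofFn fun i => FreeGroup.of (.inl (.elt (t.args i)) : Letter S)).prod := by
  rw [← FreeGroup.lift_of_apply (FreeGroup.mk _), FreeGroup.lift_mk, argsWord, List.map_ofFn]
  rfl

theorem Atom.mk_halfWord (t : Atom S) (s : ℕ) (pre : List (Letter S × Bool)) :
    FreeGroup.mk (t.halfWord s pre).toList = FreeGroup.mk pre * ((List.range 50).map fun k =>
      (List.ofFn fun i => FreeGroup.of (.inl (.elt (t.args i)) : Letter S)).prod *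
        FreeGroup.of (.inl .b) ^ (100 * t.symbol + s + k + 1)).prod := by
  rw [BlockWord.toList, BlockWord.mk_initial _ (by simp [halfWord]), ← mk_argsWord]
  rfl

variable {N : Subgroup (FreeGroup (Letter S))} [N.Normal]

theorem Atom.secondHalf_mem_iff (t : Atom S)
    (hfirst : FreeGroup.mk (blockWord (.firstHalf t)).toList ∈ N) :
    FreeGroup.mk (blockWord (.secondHalf t)).toList ∈ N ↔
      FreeGroup.mk t.invValue * FreeGroup.map Sum.inl (wProd t.symbol
        (fun i => FreeGroup.of (GenSym.elt (t.args i))) (FreeGroup.of GenSym.b)) ∈ N := by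
  set v := FreeGroup.mk t.invValue
  set w₁ := FreeGroup.mk (blockWord (.firstHalf t)).toList with hw₁
  set w₂ := FreeGroup.mk (blockWord (.secondHalf t)).toList with hw₂
  let g : FreeGroup (Letter S) := FreeGroup.of (.inr t)
  rw [blockWord, mk_halfWord, ← FreeGroup.mul_mk, show FreeGroup.mk t.invValue = v from rfl,
    show FreeGroup.mk [(.inr t, true)] = g from rfl] at hw₂
  rw [blockWord, mk_halfWord, show FreeGroup.mk [(.inr t, false)] = g⁻¹ from rfl] at hw₁
  have hw : v * FreeGroup.map Sum.inl (wProd t.symbol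
      (fun i => FreeGroup.of (GenSym.elt (t.args i))) (FreeGroup.of GenSym.b)) =
      v * g * w₁ * (v * g)⁻¹ * w₂ := by
    rw [map_wProd, wProd_eq_mul, hw₁, hw₂]
    simp only [FreeGroup.map.of]
    group
  rw [hw, N.mul_mem_cancel_left (‹N.Normal›.conj_mem _ hfirst _)]

theorem exists_isChainBase_ne (x : GenSym S.A) : ∃ y, x ≠ y ∧ IsChainBase y := by
  by_cases hx : x = .c
  · exact ⟨.d, by simp [hx], .d, nofun⟩
  · exact ⟨.c, hx, .c, nofun⟩

/-- The indices of the relators that are imposed: the second half of the relator of a relational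
atom is excluded, unless the atom is true. -/
def relatorIndices (S : IndexedStructure) : Set (BlockIndex S ⊕ Fin 2) :=
  {ρ | ∀ t, ρ = .inl (.secondHalf t) → S.isFunc t.symbol ∨ S.relInterp t.symbol t.args}

/-- The kernel of the presentation on the generators `Letter S` with the relators that are imposed.
It contains the relators of `G(𝒜)`, those of atoms by elimination of the additional generators. -/
noncomputable def relatorClosure : Subgroup (FreeGroup (Letter S)) :=
  Subgroup.normalClosure
    ((blockFamily S hp).toSmallCancellationFamily.relator '' relatorIndices S)

instance : (relatorClosure (S := S) hp).Normal := Subgroup.normalClosure_normal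

theorem exists_word_eq (l : Letter S) : ∃ ρ ∈ relatorIndices S,
    ∃ i, ((blockFamily S hp).toSmallCancellationFamily.word ρ i).1 = l := by
  rcases l with x | t
  · obtain ⟨y, hne, hy⟩ := exists_isChainBase_ne x
    have hx : (.inl x, true) ∈ (chainWord x y).toList :=
      BlockWord.subset_toList (by simp [chainWord]) (List.mem_singleton_self _)
    obtain ⟨i, hi⟩ :=
      BlockFamily.exists_word_inl (B := blockFamily S hp) (ρ := .chain x y hne hy) hx
    exact ⟨.inl (.chain x y hne hy), fun _ => nofun, i, congrArg Prod.fst hi⟩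
  · have ht : (.inr t, false) ∈ (blockWord (.firstHalf t)).toList :=
      BlockWord.subset_toList (by simp [blockWord, Atom.halfWord]) List.mem_cons_self
    obtain ⟨i, hi⟩ := BlockFamily.exists_word_inl (B := blockFamily S hp) (ρ := .firstHalf t) ht
    exact ⟨.inl (.firstHalf t), fun _ => nofun, i, congrArg Prod.fst hi⟩

theorem mk_blockWord_mem {ρ : BlockIndex S} (hρ : .inl ρ ∈ relatorIndices S) :
    FreeGroup.mk (blockWord ρ).toList ∈ relatorClosure hp :=
  (BlockFamily.relator_inl (B := blockFamily S hp) ρ) ▸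
    Subgroup.subset_normalClosure (Set.mem_image_of_mem _ hρ)

theorem mk_firstHalf_mem (t : Atom S) :
    FreeGroup.mk (blockWord (.firstHalf t)).toList ∈ relatorClosure hp :=
  mk_blockWord_mem hp fun _ => nofun

theorem mk_secondHalf_notMem (hrel : ¬ S.isFunc t.symbol)
    (hfalse : ¬ S.relInterp t.symbol t.args) :
    FreeGroup.mk (blockWord (.secondHalf t)).toList ∉ relatorClosure hp := by
  have := SmallCancellationFamily.relator_notMem_normalClosure
    (F := (blockFamily S hp).toSmallCancellationFamily) (ρ₀ := .inl (.secondHalf t))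
    (fun h => (h t rfl).elim hrel hfalse) (exists_word_eq hp)
  rwa [BlockFamily.relator_inl] at this

theorem map_power_mem (i : Fin 2) :
    FreeGroup.map Sum.inl (FreeGroup.of (![.f1, .f2] i : GenSym S.A) ^ p i) ∈
      relatorClosure hp := by
  have : (blockFamily S hp).toSmallCancellationFamily.relator (.inr i) ∈ relatorClosure hp :=
    Subgroup.subset_normalClosure (Set.mem_image_of_mem _ fun _ => nofun)
  rw [BlockFamily.relator_inr] at this
  fin_cases i <;> simpa [blockFamily] using this

theorem map_chainProd_mem (hne : x ≠ y) (hy : IsChainBase y) :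
    FreeGroup.map Sum.inl (chainProd (offset x) (FreeGroup.of x) (FreeGroup.of y)) ∈
      relatorClosure hp :=
  mk_chainWord x y ▸ mk_blockWord_mem hp (ρ := .chain x y hne hy) fun _ => nofun

theorem map_mem_relatorClosure {r : FreeGroup (GenSym S.A)} (hr : r ∈ grpRels S (p 0) (p 1)) :
    FreeGroup.map Sum.inl r ∈ relatorClosure hp := by
  have hc : IsChainBase (S := S) .c := ⟨.c, nofun⟩
  have hd : IsChainBase (S := S) .d := ⟨.d, nofun⟩
  have hf1 : IsChainBase (S := S) .f1 := ⟨.f1, nofun⟩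
  have hf2 : IsChainBase (S := S) .f2 := ⟨.f2, nofun⟩
  rcases hr with ((hr | ⟨a, hr | hr⟩) | ⟨m, hm, hfunc, as, rfl⟩) | ⟨m, hm, hrel, as, htrue, rfl⟩
  · rcases hr with hr | hr | hr | hr | hr | hr | hr | hr | hr | hr <;> rw [hr]
    · exact map_power_mem hp 0
    · exact map_power_mem hp 1
    · exact map_chainProd_mem hp (x := .f1) nofun hf2
    · exact map_chainProd_mem hp (x := .f2) nofun hf1
    · exact map_chainProd_mem hp (x := .b) nofun hf1
    · exact map_chainProd_mem hp (x := .b) nofun hf2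
    · exact map_chainProd_mem hp (x := .c) nofun hf1
    · exact map_chainProd_mem hp (x := .c) nofun hf2
    · exact map_chainProd_mem hp (x := .d) nofun hf1
    · exact map_chainProd_mem hp (x := .d) nofun hf2
  · exact hr ▸ map_chainProd_mem hp nofun hc
  · exact hr ▸ map_chainProd_mem hp nofun hd
  · have hmem := (Atom.secondHalf_mem_iff ⟨m, hm, as⟩ (mk_firstHalf_mem hp _)).1
      (mk_blockWord_mem hp (by rintro _ ⟨⟩; exact Or.inl hfunc))
    rw [Atom.invValue_of_isFunc hfunc] at hmem
    rw [map_mul, (inferInstance : (relatorClosure hp).Normal).mem_comm_iff, map_inv]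
    exact hmem
  · have hmem := (Atom.secondHalf_mem_iff ⟨m, hm, as⟩ (mk_firstHalf_mem hp _)).1
      (mk_blockWord_mem hp (by rintro _ ⟨⟩; exact Or.inr htrue))
    rwa [Atom.invValue_of_not_isFunc hrel, ← FreeGroup.one_eq_mk, one_mul] at hmem

theorem Atom.map_wProd_notMem (hrel : ¬ S.isFunc t.symbol)
    (hfalse : ¬ S.relInterp t.symbol t.args) : FreeGroup.map Sum.inl (wProd t.symbol
      (fun i => FreeGroup.of (GenSym.elt (t.args i))) (FreeGroup.of GenSym.b)) ∉
        relatorClosure hp := by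
  have := (t.secondHalf_mem_iff (mk_firstHalf_mem hp t)).not.1 (mk_secondHalf_notMem hp hrel hfalse)
  rwa [invValue_of_not_isFunc hrel, ← FreeGroup.one_eq_mk, one_mul] at this

end SmallCancellation

open SmallCancellation in
theorem stmt_4_general (S : IndexedStructure) (p₁ p₂ : ℕ)
    (hp₁ : 4 * 10 ^ 8 ≤ p₁) (hp₂ : 4 * 10 ^ 8 ≤ p₂)
    (m : ℕ) (hm : 1 ≤ m) (hrel : ¬ S.isFunc m) (as : Fin (S.arity m) → S.A)
    (h : wProd m (fun i => gen S p₁ p₂ (GenSym.elt (as i))) (gen S p₁ p₂ GenSym.b) = 1) :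
    S.relInterp m as := by
  by_contra hfalse
  have hp : ∀ i, 4 * 10 ^ 8 ≤ ![p₁, p₂] i := Fin.forall_fin_two.2 ⟨hp₁, hp₂⟩
  have hle : Subgroup.normalClosure (grpRels S p₁ p₂) ≤
      (relatorClosure hp).comap (FreeGroup.map Sum.inl) :=
    Subgroup.normalClosure_le_normal fun _ hr => map_mem_relatorClosure hp hr
  have hmem : wProd m (fun i => FreeGroup.of (GenSym.elt (as i))) (FreeGroup.of GenSym.b) ∈
      Subgroup.normalClosure (grpRels S p₁ p₂) := by
    rw [← PresentedGroup.mk_eq_one_iff, map_wProd]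
    exact h
  exact Atom.map_wProd_notMem (t := ⟨m, hm, as⟩) hp hrel hfalse (hle hmem)

/-- Lemma `lem:functor-works`(2): if the `m`-th symbol of `L` is a relation
symbol `R` of arity `n`, and `a₁,…,aₙ ∈ A` are such that `w_m(a₁,…,aₙ,b) = e` holds in
`G(𝒜)`, then `R^𝒜(a₁,…,aₙ)` holds in `𝒜`. -/
theorem stmt_4 (S : IndexedStructure) (p₁ p₂ : ℕ)
    (hp₁ : p₁.Prime) (hp₂ : p₂.Prime) (hne : p₁ ≠ p₂)
    (hbig₁ : 10 ^ 10 < p₁) (hbig₂ : 10 ^ 10 < p₂)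
    (m : ℕ) (hm : 1 ≤ m) (hrel : ¬ S.isFunc m)
    (as : Fin (S.arity m) → S.A)
    (h : wProd m (fun i => gen S p₁ p₂ (GenSym.elt (as i))) (gen S p₁ p₂ GenSym.b) = 1) :
    S.relInterp m as :=
  stmt_4_general S p₁ p₂ (by linarith) (by linarith) m hm hrel as h
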